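/- Generalized Clebsch–Gordan integral of three Legendre functions of equal degree: for every ν ∈ ℂ such that ν ∉ ℤ and 3ν ∉ ℤ, ∫_{−1}^1 [P_ν(x)]² P_ν(−x) dx = ((1 + 2 cos(πν))/3) · π Γ((ν+1)/2) Γ((3ν+2)/2) / ( [Γ((1−ν)/2)]² [Γ((ν+2)/2)]³ Γ((3ν+3)/2) ). -/

import Mathlib

open Real MeasureTheory intervalIntegral

/-- Legendre function of the first kind of complex degree `ν`, defined on `(-1, 1]`
via the Mehler–Dirichlet integral. -/
noncomputable def legendreP (ν : ℂ) (x : ℝ) : ℂ :=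
  if x = 1 then 1
  else ((2 / π : ℝ) : ℂ) *
    ∫ β in (0:ℝ)..(Real.arccos x),
      Complex.cos ((2*ν + 1) * (β:ℂ) / 2) / ((Real.sqrt (2 * (Real.cos β - x)) : ℝ) : ℂ)

/-!
The substitution `sin (β / 2) = √((1 - x) / 2) * sin φ` turns the Mehler–Dirichlet integral into
the hypergeometric series `₂F₁(-ν, ν + 1; 1; (1 - x) / 2)`. Hence `P_ν` solves the Legendre
equation, and `P_{ν+1}` is a combination of `P_ν` and `P_ν'`. An explicit certificate, a cubic form
in `P_ν`, `P_ν'` with polynomial coefficients whose boundary values vanish, then telescopes to a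
first-order recurrence with step `2` in the degree for `I(ν) = ∫ P_ν(x)² P_ν(-x) dx`.

The Gamma-function side satisfies the same recurrence, and both sides are invariant under
`ν ↦ -1 - ν`. Their quotient is therefore invariant under the infinite dihedral group generated by
`ν ↦ -1 - ν` and `ν ↦ 1 - ν`. Since it is holomorphic for `|re ν| < 2 / 3`, its translates by this
group glue to an entire function. Bounds on both sides in `|re ν| ≤ 1 / 2` show that this function
grows polynomially, so it is a polynomial. It takes the value `1` at every integer, because
`I(0) = 2`, and so it is identically `1`.
-/

/-! ### Ordinary hypergeometric functions -/

section Hypergeometric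

variable {a b c t : ℂ}

lemma hasSum_deriv_of_hasFPowerSeriesOnBall {f : ℂ → ℂ} {p : FormalMultilinearSeries ℂ ℂ ℂ}
    {r : ENNReal} (hf : HasFPowerSeriesOnBall f p 0 r) {z : ℂ} (hz : z ∈ Metric.eball 0 r) :
    HasSum (fun n : ℕ => ((n : ℂ) + 1) * p.coeff (n + 1) * z ^ n) (deriv f z) := by
  have hsum := (ContinuousLinearMap.apply ℂ ℂ (1 : ℂ)).hasSum (hf.fderiv.hasSum hz)
  rw [zero_add] at hsum
  refine hsum.congr_fun fun n => ?_
  simp only [ContinuousLinearMap.apply_apply, FormalMultilinearSeries.apply_eq_pow_smul_coeff,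
    smul_apply, FormalMultilinearSeries.derivSeries_coeff_one, smul_eq_mul,
    nsmul_eq_mul, Nat.cast_add, Nat.cast_one]
  ring

lemma one_le_radius_ordinaryHypergeometricSeries (a b c : ℂ) :
    1 ≤ (ordinaryHypergeometricSeries ℂ a b c).radius := by
  by_cases h : ∀ k : ℕ, ↑k ≠ -a ∧ ↑k ≠ -b ∧ ↑k ≠ -c
  · exact (ordinaryHypergeometricSeries_radius_eq_one ℂ a b c h).ge
  · obtain ⟨k, hk⟩ : ∃ k : ℕ, a = -k ∨ b = -k ∨ c = -k := by
      simpa only [not_forall, Classical.not_and_iff_not_or_not, not_not, eq_neg_iff_add_eq_zero,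
        add_comm] using h
    rcases hk with rfl | rfl | rfl
    · simp [ordinaryHypergeometric_radius_top_of_neg_nat₁]
    · simp [ordinaryHypergeometric_radius_top_of_neg_nat₂]
    · simp [ordinaryHypergeometric_radius_top_of_neg_nat₃]

lemma hasFPowerSeriesOnBall_ordinaryHypergeometric (a b c : ℂ) :
    HasFPowerSeriesOnBall (₂F₁ a b c) (ordinaryHypergeometricSeries ℂ a b c) 0 1 :=
  have hr := one_le_radius_ordinaryHypergeometricSeries a b c
  (FormalMultilinearSeries.hasFPowerSeriesOnBall _ (one_pos.trans_le hr)).mono one_pos hr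

lemma mem_eball_zero_one_iff : t ∈ Metric.eball (0 : ℂ) 1 ↔ ‖t‖ < 1 := by
  rw [← ENNReal.coe_one, Metric.eball_coe, mem_ball_zero_iff, NNReal.coe_one]

lemma coeff_ordinaryHypergeometricSeries (a b c : ℂ) (n : ℕ) :
    (ordinaryHypergeometricSeries ℂ a b c).coeff n = ordinaryHypergeometricCoefficient a b c n := by
  simp [ordinaryHypergeometricSeries]

lemma hasSum_ordinaryHypergeometric (a b c : ℂ) (ht : ‖t‖ < 1) :
    HasSum (fun n => ordinaryHypergeometricCoefficient a b c n * t ^ n) (₂F₁ a b c t) := by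
  have h := (hasFPowerSeriesOnBall_ordinaryHypergeometric a b c).hasSum
    (mem_eball_zero_one_iff.mpr ht)
  simpa only [ordinaryHypergeometricSeries_apply_eq, smul_eq_mul, zero_add] using h

lemma differentiableOn_ordinaryHypergeometric (a b c : ℂ) :
    DifferentiableOn ℂ (₂F₁ a b c : ℂ → ℂ) (Metric.ball 0 1) := fun t ht =>
  ((hasFPowerSeriesOnBall_ordinaryHypergeometric a b c).analyticOnNhd t
    (mem_eball_zero_one_iff.mpr (mem_ball_zero_iff.mp ht))).differentiableAt.differentiableWithinAt

lemma hasDerivAt_ordinaryHypergeometric (a b c : ℂ) (ht : ‖t‖ < 1) :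
    HasDerivAt (₂F₁ a b c) (deriv (₂F₁ a b c) t) t :=
  ((differentiableOn_ordinaryHypergeometric a b c).differentiableAt
    (Metric.isOpen_ball.mem_nhds (mem_ball_zero_iff.mpr ht))).hasDerivAt

lemma hasSum_deriv_ordinaryHypergeometric (a b c : ℂ) (ht : ‖t‖ < 1) :
    HasSum (fun n : ℕ => (n + 1) * ordinaryHypergeometricCoefficient a b c (n + 1) * t ^ n)
      (deriv (₂F₁ a b c) t) := by
  simpa only [coeff_ordinaryHypergeometricSeries] using hasSum_deriv_of_hasFPowerSeriesOnBall
    (hasFPowerSeriesOnBall_ordinaryHypergeometric a b c) (mem_eball_zero_one_iff.mpr ht)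

lemma hasSum_mul_deriv_ordinaryHypergeometric (a b c : ℂ) (ht : ‖t‖ < 1) :
    HasSum (fun n : ℕ => n * ordinaryHypergeometricCoefficient a b c n * t ^ n)
      (t * deriv (₂F₁ a b c) t) := by
  rw [← hasSum_nat_add_iff' 1]
  simp only [Finset.range_one, Finset.sum_singleton, Nat.cast_zero, zero_mul, sub_zero]
  refine ((hasSum_deriv_ordinaryHypergeometric a b c ht).mul_left t).congr_fun fun n => ?_
  push_cast
  ring

lemma ascPochhammer_eval_add_one_mul (a : ℂ) (n : ℕ) :
    a * (ascPochhammer ℂ n).eval (a + 1) = (ascPochhammer ℂ n).eval a * (a + n) := by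
  rw [← ascPochhammer_succ_eval, ascPochhammer_succ_left]
  simp

lemma ordinaryHypergeometricCoefficient_succ (a b c : ℂ) (n : ℕ) :
    ordinaryHypergeometricCoefficient a b c (n + 1) =
      ordinaryHypergeometricCoefficient a b c n * ((a + n) * (b + n) / ((n + 1) * (c + n))) := by
  simp only [ordinaryHypergeometricCoefficient, ascPochhammer_succ_eval, Nat.factorial_succ,
    Nat.cast_mul, Nat.cast_add, Nat.cast_one, mul_inv_rev, div_eq_mul_inv]
  ring

lemma add_natCast_mul_ordinaryHypergeometricCoefficient_add_one (a b : ℂ)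
    (hc : ∀ n : ℕ, c + n ≠ 0) (n : ℕ) :
    (c + n) * ordinaryHypergeometricCoefficient a b (c + 1) n =
      c * ordinaryHypergeometricCoefficient a b c n := by
  have hc0 : c ≠ 0 := by simpa using hc 0
  have h : (ascPochhammer ℂ n).eval (c + 1) = (ascPochhammer ℂ n).eval c * (c + n) / c := by
    rw [← ascPochhammer_eval_add_one_mul, mul_div_cancel_left₀ _ hc0]
  simp only [ordinaryHypergeometricCoefficient, h]
  have := hc n
  field_simp

lemma one_add_natCast_ne_zero (n : ℕ) : (1 : ℂ) + n ≠ 0 := by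
  rw [add_comm]
  exact n.cast_add_one_ne_zero

lemma mul_deriv_ordinaryHypergeometric_add_one (a b : ℂ) (hc : ∀ n : ℕ, c + n ≠ 0)
    (ht : ‖t‖ < 1) :
    t * deriv (₂F₁ a b (c + 1)) t = c * (₂F₁ a b c t - ₂F₁ a b (c + 1) t) := by
  refine (hasSum_mul_deriv_ordinaryHypergeometric a b (c + 1) ht).unique
    (((hasSum_ordinaryHypergeometric a b c ht).sub
      (hasSum_ordinaryHypergeometric a b (c + 1) ht)).mul_left c |>.congr_fun fun n => ?_)
  linear_combination t ^ n * add_natCast_mul_ordinaryHypergeometricCoefficient_add_one a b hc n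

lemma one_sub_mul_deriv_ordinaryHypergeometric (a b : ℂ) (hc : ∀ n : ℕ, c + n ≠ 0)
    (ht : ‖t‖ < 1) :
    (1 - t) * deriv (₂F₁ a b c) t =
      (a + b - c) * ₂F₁ a b c t + (c - a) * (c - b) / c * ₂F₁ a b (c + 1) t := by
  rw [sub_mul, one_mul]
  refine ((hasSum_deriv_ordinaryHypergeometric a b c ht).sub
    (hasSum_mul_deriv_ordinaryHypergeometric a b c ht)).unique
    (((hasSum_ordinaryHypergeometric a b c ht).mul_left _).add
      ((hasSum_ordinaryHypergeometric a b (c + 1) ht).mul_left _) |>.congr_fun fun n => ?_)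
  have hc0 : c ≠ 0 := by simpa using hc 0
  have hcn := hc n
  have hn : (n : ℂ) + 1 ≠ 0 := n.cast_add_one_ne_zero
  have hcoeff : ordinaryHypergeometricCoefficient a b (c + 1) n =
      c * ordinaryHypergeometricCoefficient a b c n / (c + n) := by
    rw [← add_natCast_mul_ordinaryHypergeometricCoefficient_add_one a b hc,
      mul_div_cancel_left₀ _ hcn]
  rw [ordinaryHypergeometricCoefficient_succ, hcoeff]
  field_simp
  ring

lemma mul_ordinaryHypergeometricCoefficient_sub_one_add_one (a b : ℂ) (n : ℕ) :
    b * ordinaryHypergeometricCoefficient (a - 1) (b + 1) 1 (n + 1) =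
      (a - 1) * (b + n) * (b + n + 1) / ((n + 1) * (1 + n)) *
        ordinaryHypergeometricCoefficient a b 1 n := by
  have ha := ascPochhammer_eval_add_one_mul (a - 1) n
  have hb := ascPochhammer_eval_add_one_mul b n
  rw [sub_add_cancel] at ha
  simp only [ordinaryHypergeometricCoefficient, ascPochhammer_succ_eval, ← ha, Nat.factorial_succ,
    Nat.cast_mul, Nat.cast_add, Nat.cast_one, mul_inv_rev, div_eq_mul_inv]
  linear_combination ((n : ℂ) + 1)⁻¹ * (Nat.factorial n : ℂ)⁻¹ * (a - 1) *
    (ascPochhammer ℂ n).eval a * (b + 1 + n) * ((ascPochhammer ℂ n).eval 1)⁻¹ * (1 + (n : ℂ))⁻¹ * hb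

lemma ordinaryHypergeometric_sub_one_add_one (hab : a + b = 1) (ht : ‖t‖ < 1) :
    b * ₂F₁ (a - 1) (b + 1) 1 t =
      b * (1 - 2 * t) * ₂F₁ a b 1 t + 2 * a * b * t * ₂F₁ a b (1 + 1) t := by
  have hraised := (hasSum_nat_add_iff' 1).mpr
    ((hasSum_ordinaryHypergeometric (a - 1) (b + 1) 1 ht).mul_left b)
  have hbase := (hasSum_nat_add_iff' 1).mpr
    ((hasSum_ordinaryHypergeometric a b 1 ht).mul_left b)
  have hsum := hbase.add (((hasSum_ordinaryHypergeometric a b 1 ht).mul_left (-2 * b * t)).add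
    ((hasSum_ordinaryHypergeometric a b (1 + 1) ht).mul_left (2 * a * b * t)))
  have := hraised.unique (hsum.congr_fun fun n => ?_)
  · simp only [Finset.range_one, Finset.sum_singleton, ordinaryHypergeometricCoefficient,
      ascPochhammer_zero, Polynomial.eval_one, Nat.factorial_zero, Nat.cast_one, inv_one, mul_one,
      pow_zero] at this
    linear_combination this
  · have hn := one_add_natCast_ne_zero n
    have hn' : (n : ℂ) + 1 ≠ 0 := n.cast_add_one_ne_zero
    have htwo : ordinaryHypergeometricCoefficient a b (1 + 1) n =
        ordinaryHypergeometricCoefficient a b 1 n / (1 + n) := by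
      rw [eq_div_iff hn, mul_comm,
        add_natCast_mul_ordinaryHypergeometricCoefficient_add_one a b one_add_natCast_ne_zero,
        one_mul]
    rw [← mul_assoc b, mul_ordinaryHypergeometricCoefficient_sub_one_add_one,
      ordinaryHypergeometricCoefficient_succ, htwo]
    obtain rfl : a = 1 - b := by linear_combination hab
    field_simp
    ring

end Hypergeometric

/-! ### The Mehler kernel as a hypergeometric function -/

lemma eq_cos_mul_of_hasDerivAt {μ : ℂ} {f g : ℝ → ℂ} {s : Set ℝ} (hs : IsOpen s)
    (hs' : IsPreconnected s) (h0 : (0 : ℝ) ∈ s)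
    (hf : ∀ y ∈ s, HasDerivAt f (-μ ^ 2 * g y) y) (hg : ∀ y ∈ s, HasDerivAt g (f y) y)
    (hf0 : f 0 = 1) (hg0 : g 0 = 0) {y : ℝ} (hy : y ∈ s) :
    f y = Complex.cos (μ * y) := by
  have hlin (y : ℝ) : HasDerivAt (fun y : ℝ => μ * (y : ℂ)) μ y := by
    simpa using (Complex.ofRealCLM.hasDerivAt (x := y)).const_mul μ
  have hcos (y : ℝ) := (Complex.hasDerivAt_cos (μ * y)).comp (h₂ := Complex.cos) y (hlin y)
  have hsin (y : ℝ) := (Complex.hasDerivAt_sin (μ * y)).comp (h₂ := Complex.sin) y (hlin y)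
  have hconst {c : ℝ → ℂ} (hc : ∀ y ∈ s, HasDerivAt c 0 y) : c y = c 0 :=
    hs.is_const_of_deriv_eq_zero hs' (fun y hy => (hc y hy).differentiableAt.differentiableWithinAt)
      (fun y hy => (hc y hy).deriv) hy h0
  have hcosine := hconst fun y hy => (((hf y hy).mul (hcos y)).add
    (((hg y hy).const_mul μ).mul (hsin y))).congr_deriv (by simp only [Function.comp_apply]; ring)
  have hsine := hconst fun y hy => (((hf y hy).mul (hsin y)).sub
    (((hg y hy).const_mul μ).mul (hcos y))).congr_deriv (by simp only [Function.comp_apply]; ring)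
  simp only [Pi.add_apply, Pi.sub_apply, Pi.mul_apply, Function.comp_apply, hf0, hg0,
    Complex.ofReal_zero, mul_zero, Complex.cos_zero, Complex.sin_zero] at hcosine hsine
  linear_combination Complex.cos (μ * y) * hcosine + Complex.sin (μ * y) * hsine -
    f y * Complex.sin_sq_add_cos_sq (μ * y)

lemma norm_ofReal_sin_sq_lt_one {y : ℝ} (hy : y ∈ Set.Ioo (-(π / 2)) (π / 2)) :
    ‖((Real.sin y ^ 2 : ℝ) : ℂ)‖ < 1 := by
  rw [Complex.norm_of_nonneg (sq_nonneg _)]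
  nlinarith [Real.cos_pos_of_mem_Ioo hy, Real.sin_sq_add_cos_sq y]

lemma hasDerivAt_ordinaryHypergeometric_sin_sq (a b c : ℂ) {y : ℝ}
    (hy : y ∈ Set.Ioo (-(π / 2)) (π / 2)) :
    HasDerivAt (fun y : ℝ => ₂F₁ a b c ((Real.sin y ^ 2 : ℝ) : ℂ))
      (deriv (₂F₁ a b c) ((Real.sin y ^ 2 : ℝ) : ℂ) * (2 * Real.sin y * Real.cos y : ℝ)) y := by
  have hsq : HasDerivAt (fun y : ℝ => ((Real.sin y ^ 2 : ℝ) : ℂ))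
      (2 * Real.sin y * Real.cos y : ℝ) y := by
    simpa using ((Real.hasDerivAt_sin y).pow 2).ofReal_comp
  exact (hasDerivAt_ordinaryHypergeometric a b c (norm_ofReal_sin_sq_lt_one hy)).comp y hsq

lemma half_add_natCast_ne_zero (n : ℕ) : (1 / 2 : ℂ) + n ≠ 0 := by
  have : ((1 / 2 + n : ℝ) : ℂ) ≠ 0 := Complex.ofReal_ne_zero.mpr (by positivity)
  simpa using this

lemma cos_mul_ordinaryHypergeometric_sin_sq (ν : ℂ) {y : ℝ}
    (hy : y ∈ Set.Ioo (-(π / 2)) (π / 2)) :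
    Real.cos y * ₂F₁ (-ν) (ν + 1) (1 / 2) ((Real.sin y ^ 2 : ℝ) : ℂ) =
      Complex.cos ((2 * ν + 1) * y) := by
  refine eq_cos_mul_of_hasDerivAt (s := Set.Ioo (-(π / 2)) (π / 2))
    (f := fun y => Real.cos y * ₂F₁ (-ν) (ν + 1) (1 / 2) ((Real.sin y ^ 2 : ℝ) : ℂ))
    (g := fun y => Real.sin y * ₂F₁ (-ν) (ν + 1) (1 / 2 + 1) ((Real.sin y ^ 2 : ℝ) : ℂ))
    isOpen_Ioo isPreconnected_Ioo ⟨by linarith [pi_pos], by linarith [pi_pos]⟩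
    (fun y hy => ?_) (fun y hy => ?_) (by simp) (by simp) hy
  · have hrel := one_sub_mul_deriv_ordinaryHypergeometric (-ν) (ν + 1) half_add_natCast_ne_zero
      (norm_ofReal_sin_sq_lt_one hy)
    refine ((Real.hasDerivAt_cos y).ofReal_comp.mul
      (hasDerivAt_ordinaryHypergeometric_sin_sq _ _ _ hy)).congr_deriv ?_
    have hcos : ((Real.cos y : ℝ) : ℂ) ^ 2 = 1 - ((Real.sin y : ℝ) : ℂ) ^ 2 := by
      exact_mod_cast Real.cos_sq' y
    simp only [Complex.ofReal_mul, Complex.ofReal_neg, Complex.ofReal_pow, Complex.ofReal_ofNat]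
      at hrel ⊢
    linear_combination 2 * (Real.sin y : ℂ) * hrel + 2 * (Real.sin y : ℂ) *
      deriv (₂F₁ (-ν) (ν + 1) (1 / 2)) ((Real.sin y : ℂ) ^ 2) * hcos
  · have hrel := mul_deriv_ordinaryHypergeometric_add_one (-ν) (ν + 1) half_add_natCast_ne_zero
      (norm_ofReal_sin_sq_lt_one hy)
    refine ((Real.hasDerivAt_sin y).ofReal_comp.mul
      (hasDerivAt_ordinaryHypergeometric_sin_sq _ _ _ hy)).congr_deriv ?_
    simp only [Complex.ofReal_mul, Complex.ofReal_pow, Complex.ofReal_ofNat] at hrel ⊢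
    linear_combination 2 * (Real.cos y : ℂ) * hrel

/-- The kernel of the Mehler–Dirichlet integral after the substitution
`sin (β / 2) = √((1 - x) / 2) * sin φ`, which makes the domain of integration fixed. -/
noncomputable def mehlerKernel (ν : ℂ) (u : ℝ) : ℂ :=
  Complex.cos ((2 * ν + 1) * Real.arcsin u) / (Real.sqrt (1 - u ^ 2) : ℂ)

lemma mehlerKernel_eq_ordinaryHypergeometric (ν : ℂ) {u : ℝ} (hu : u ∈ Set.Ioo (-1 : ℝ) 1) :
    mehlerKernel ν u = ₂F₁ (-ν) (ν + 1) (1 / 2) ((u ^ 2 : ℝ) : ℂ) := by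
  have hcos := cos_mul_ordinaryHypergeometric_sin_sq ν
    ⟨Real.neg_pi_div_two_lt_arcsin.mpr hu.1, Real.arcsin_lt_pi_div_two.mpr hu.2⟩
  have hsqrt : (Real.sqrt (1 - u ^ 2) : ℂ) ≠ 0 :=
    Complex.ofReal_ne_zero.mpr (Real.sqrt_pos.mpr (by nlinarith [hu.1, hu.2])).ne'
  rw [mehlerKernel, ← hcos, Real.sin_arcsin hu.1.le hu.2.le, Real.cos_arcsin,
    mul_div_cancel_left₀ _ hsqrt]

lemma mul_sin_mem_Ioo {s : ℝ} (hs0 : 0 ≤ s) (hs1 : s < 1) (φ : ℝ) :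
    s * Real.sin φ ∈ Set.Ioo (-1) 1 := by
  constructor <;> nlinarith [Real.sin_le_one φ, Real.neg_one_le_sin φ]

lemma arccos_eq_two_mul_arcsin_sqrt {x : ℝ} (hx : x ∈ Set.Icc (-1 : ℝ) 1) :
    Real.arccos x = 2 * Real.arcsin (Real.sqrt ((1 - x) / 2)) := by
  have hs1 : Real.sqrt ((1 - x) / 2) ≤ 1 := Real.sqrt_le_one.mpr (by linarith [hx.1])
  have hs0 := Real.sqrt_nonneg ((1 - x) / 2)
  have hx' : x = Real.cos (2 * Real.arcsin (Real.sqrt ((1 - x) / 2))) := by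
    rw [Real.cos_two_mul_eq_one_sub, Real.sin_arcsin (by linarith) hs1,
      Real.sq_sqrt (by linarith [hx.2])]
    ring
  conv_lhs => rw [hx']
  exact Real.arccos_cos (by linarith [Real.arcsin_nonneg.mpr hs0])
    (by linarith [Real.arcsin_le_pi_div_two (Real.sqrt ((1 - x) / 2))])

lemma sqrt_one_sub_div_two_mem_Ioo {x : ℝ} (hx : x ∈ Set.Ioo (-1 : ℝ) 1) :
    Real.sqrt ((1 - x) / 2) ∈ Set.Ioo 0 1 :=
  ⟨Real.sqrt_pos.mpr (by linarith [hx.2]),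
    (Real.sqrt_lt' one_pos).mpr (by linarith [hx.1])⟩

lemma sqrt_two_mul_cos_two_mul_arcsin_sub {s φ : ℝ} (hs : s ∈ Set.Ioo (0 : ℝ) 1)
    (hφ : φ ∈ Set.Icc 0 (π / 2)) :
    Real.sqrt (2 * (Real.cos (2 * Real.arcsin (s * Real.sin φ)) - (1 - 2 * s ^ 2))) =
      2 * s * Real.cos φ := by
  have hu := mul_sin_mem_Ioo hs.1.le hs.2 φ
  have hcos := Real.cos_nonneg_of_mem_Icc ⟨by linarith [hφ.1, pi_pos], hφ.2⟩
  rw [Real.cos_two_mul, Real.cos_sq', Real.sin_arcsin hu.1.le hu.2.le,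
    ← Real.sqrt_sq (mul_nonneg (mul_nonneg zero_le_two hs.1.le) hcos)]
  congr 1
  linear_combination -4 * s ^ 2 * Real.sin_sq_add_cos_sq φ

lemma smul_cos_div_sqrt_comp_two_mul_arcsin (ν : ℂ) {s φ : ℝ} (hs : s ∈ Set.Ioo (0 : ℝ) 1)
    (hφ : φ ∈ Set.Ioo 0 (π / 2)) :
    (2 * (1 / Real.sqrt (1 - (s * Real.sin φ) ^ 2) * (s * Real.cos φ))) •
        (Complex.cos ((2 * ν + 1) * ((2 * Real.arcsin (s * Real.sin φ) : ℝ) : ℂ) / 2) /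
          (Real.sqrt (2 * (Real.cos (2 * Real.arcsin (s * Real.sin φ)) - (1 - 2 * s ^ 2))) : ℂ)) =
      mehlerKernel ν (s * Real.sin φ) := by
  have hcos := Real.cos_pos_of_mem_Ioo ⟨by linarith [hφ.1, pi_pos], hφ.2⟩
  have hs' : (s : ℂ) ≠ 0 := Complex.ofReal_ne_zero.mpr hs.1.ne'
  have hcos' : (Real.cos φ : ℂ) ≠ 0 := Complex.ofReal_ne_zero.mpr hcos.ne'
  simp only [sqrt_two_mul_cos_two_mul_arcsin_sub hs (Set.Ioo_subset_Icc_self hφ), mehlerKernel,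
    Complex.real_smul, Complex.ofReal_mul, Complex.ofReal_div, Complex.ofReal_ofNat,
    Complex.ofReal_one]
  field_simp

theorem legendreP_eq_integral_mehlerKernel (ν : ℂ) {x : ℝ} (hx : x ∈ Set.Ioo (-1 : ℝ) 1) :
    legendreP ν x = ((2 / π : ℝ) : ℂ) *
      ∫ φ in (0 : ℝ)..(π / 2), mehlerKernel ν (Real.sqrt ((1 - x) / 2) * Real.sin φ) := by
  have hs := sqrt_one_sub_div_two_mem_Ioo hx
  have hxs : x = 1 - 2 * Real.sqrt ((1 - x) / 2) ^ 2 := by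
    rw [Real.sq_sqrt (by linarith [hx.2])]; ring
  rw [legendreP, if_neg hx.2.ne, arccos_eq_two_mul_arcsin_sqrt (Set.Ioo_subset_Icc_self hx)]
  set s := Real.sqrt ((1 - x) / 2)
  have hsub := integral_deriv_smul_comp_of_deriv_nonneg (a := 0) (b := π / 2)
    (f := fun φ => 2 * Real.arcsin (s * Real.sin φ))
    (f' := fun φ => 2 * (1 / Real.sqrt (1 - (s * Real.sin φ) ^ 2) * (s * Real.cos φ)))
    (g := fun β : ℝ => Complex.cos ((2 * ν + 1) * (β : ℂ) / 2) /
      ((Real.sqrt (2 * (Real.cos β - x)) : ℝ) : ℂ)) ?_ ?_ ?_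
  · simp only [Real.sin_zero, mul_zero, Real.arcsin_zero, Real.sin_pi_div_two, mul_one] at hsub
    rw [← hsub]
    congr 1
    refine integral_congr_Ioo_of_le (by positivity) fun φ hφ => ?_
    rw [hxs]
    exact smul_cos_div_sqrt_comp_two_mul_arcsin ν hs hφ
  · have := Real.continuous_arcsin
    fun_prop
  · intro φ _
    have hu := mul_sin_mem_Ioo hs.1.le hs.2 φ
    exact ((Real.hasDerivAt_arcsin hu.1.ne' hu.2.ne).comp φ
      ((Real.hasDerivAt_sin φ).const_mul s)).const_mul 2
  · intro φ hφ
    rw [min_eq_left (by positivity), max_eq_right (by positivity)] at hφ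
    have := hs.1
    have hcos := Real.cos_nonneg_of_mem_Icc ⟨by linarith [hφ.1, pi_pos], hφ.2.le⟩
    positivity

/-! ### Legendre functions as hypergeometric functions -/

lemma integral_sin_pow_even_zero_pi_div_two (n : ℕ) :
    ((∫ φ in (0 : ℝ)..(π / 2), Real.sin φ ^ (2 * n) : ℝ) : ℂ) =
      π / 2 * ((ascPochhammer ℂ n).eval (1 / 2) / (ascPochhammer ℂ n).eval 1) := by
  induction n with
  | zero => simp
  | succ n ih =>
    have hn := one_add_natCast_ne_zero n
    have hn' : (2 : ℂ) * n + 2 ≠ 0 := by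
      rw [show (2 : ℂ) * n + 2 = 2 * (1 + n) by ring]
      exact mul_ne_zero two_ne_zero hn
    rw [show 2 * (n + 1) = 2 * n + 2 by ring, integral_sin_pow, ascPochhammer_succ_eval,
      ascPochhammer_succ_eval, Complex.ofReal_add, Complex.ofReal_mul, ih]
    simp only [Real.sin_zero, Real.cos_zero, Real.sin_pi_div_two, Real.cos_pi_div_two]
    push_cast
    field_simp [hn']
    ring

lemma ordinaryHypergeometricCoefficient_half_mul_ascPochhammer_div (a b : ℂ) (n : ℕ) :
    ordinaryHypergeometricCoefficient a b (1 / 2) n *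
      ((ascPochhammer ℂ n).eval (1 / 2) / (ascPochhammer ℂ n).eval 1) =
        ordinaryHypergeometricCoefficient a b 1 n := by
  have hhalf : (ascPochhammer ℂ n).eval (1 / 2) ≠ 0 := fun h => by
    obtain ⟨k, -, hk⟩ := (ascPochhammer_eval_eq_zero_iff n (1 / 2 : ℂ)).mp h
    exact half_add_natCast_ne_zero k (by rw [hk]; ring)
  simp only [ordinaryHypergeometricCoefficient]
  field_simp

theorem integral_ordinaryHypergeometric_half_mul_sin_sq (a b : ℂ) {z : ℂ} (hz : ‖z‖ < 1) :
    ∫ φ in (0 : ℝ)..(π / 2), ₂F₁ a b (1 / 2) (z * ((Real.sin φ ^ 2 : ℝ) : ℂ)) =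
      π / 2 * ₂F₁ a b 1 z := by
  have hle (φ : ℝ) : ‖z * ((Real.sin φ ^ 2 : ℝ) : ℂ)‖ ≤ ‖z‖ := by
    rw [norm_mul, Complex.norm_of_nonneg (sq_nonneg _)]
    exact mul_le_of_le_one_right (norm_nonneg z) (Real.sin_sq_le_one φ)
  have hsum : HasSum (fun n : ℕ => ∫ φ in (0 : ℝ)..(π / 2),
      ordinaryHypergeometricCoefficient a b (1 / 2) n * (z * ((Real.sin φ ^ 2 : ℝ) : ℂ)) ^ n)
      (∫ φ in (0 : ℝ)..(π / 2), ₂F₁ a b (1 / 2) (z * ((Real.sin φ ^ 2 : ℝ) : ℂ))) := by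
    refine hasSum_integral_of_dominated_convergence
      (fun n _ => ‖ordinaryHypergeometricCoefficient a b (1 / 2) n * z ^ n‖)
      (fun n => (by fun_prop : Continuous _).aestronglyMeasurable)
      (fun n => .of_forall fun φ _ => ?_)
      (.of_forall fun φ _ => (hasSum_ordinaryHypergeometric a b (1 / 2) hz).summable.norm)
      intervalIntegrable_const
      (.of_forall fun φ _ => hasSum_ordinaryHypergeometric a b _ ((hle φ).trans_lt hz))
    simp only [norm_mul _ (_ ^ n), norm_pow]
    gcongr
    exact hle φ
  refine hsum.unique (((hasSum_ordinaryHypergeometric a b 1 hz).mul_left _).congr_fun fun n => ?_)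
  have hterm (φ : ℝ) : ordinaryHypergeometricCoefficient a b (1 / 2) n *
      (z * ((Real.sin φ ^ 2 : ℝ) : ℂ)) ^ n =
        ordinaryHypergeometricCoefficient a b (1 / 2) n * z ^ n *
          ((Real.sin φ ^ (2 * n) : ℝ) : ℂ) := by
    push_cast
    ring
  simp_rw [hterm]
  rw [intervalIntegral.integral_const_mul, intervalIntegral.integral_ofReal,
    integral_sin_pow_even_zero_pi_div_two,
    ← ordinaryHypergeometricCoefficient_half_mul_ascPochhammer_div]
  ring

lemma norm_ofReal_one_sub_div_two_lt_one {x : ℝ} (hx : x ∈ Set.Ioo (-1 : ℝ) 1) :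
    ‖(((1 - x) / 2 : ℝ) : ℂ)‖ < 1 := by
  rw [Complex.norm_of_nonneg (by linarith [hx.2])]
  linarith [hx.1]

theorem legendreP_eq_ordinaryHypergeometric (ν : ℂ) {x : ℝ} (hx : x ∈ Set.Ioo (-1 : ℝ) 1) :
    legendreP ν x = ₂F₁ (-ν) (ν + 1) 1 (((1 - x) / 2 : ℝ) : ℂ) := by
  have hs := sqrt_one_sub_div_two_mem_Ioo hx
  have hkernel (φ : ℝ) : mehlerKernel ν (Real.sqrt ((1 - x) / 2) * Real.sin φ) =
      ₂F₁ (-ν) (ν + 1) (1 / 2) ((((1 - x) / 2 : ℝ) : ℂ) * ((Real.sin φ ^ 2 : ℝ) : ℂ)) := by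
    rw [mehlerKernel_eq_ordinaryHypergeometric ν (mul_sin_mem_Ioo hs.1.le hs.2 φ), mul_pow,
      Real.sq_sqrt (by linarith [hx.2]), Complex.ofReal_mul]
  have hpi : (π : ℂ) ≠ 0 := Complex.ofReal_ne_zero.mpr pi_ne_zero
  rw [legendreP_eq_integral_mehlerKernel ν hx]
  simp_rw [hkernel]
  rw [integral_ordinaryHypergeometric_half_mul_sin_sq _ _ (norm_ofReal_one_sub_div_two_lt_one hx)]
  push_cast
  field_simp

lemma legendreP_neg_one_sub (ν : ℂ) (x : ℝ) : legendreP (-1 - ν) x = legendreP ν x := by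
  have hneg (β : ℝ) : (2 * (-1 - ν) + 1) * (β : ℂ) / 2 = -((2 * ν + 1) * β / 2) := by ring
  simp only [legendreP, hneg, Complex.cos_neg]

/-! ### The Legendre equation and raising of the degree -/

/-- The Sturm–Liouville quasi-derivative `(1 - x²) P_ν'(x)`, given by the hypergeometric series
that is regular at `x = 1`. -/
noncomputable def legendreQuasiDeriv (ν : ℂ) (x : ℝ) : ℂ :=
  2 * ν * (ν + 1) * ((1 - x) / 2 : ℝ) * ₂F₁ (-ν) (ν + 1) (1 + 1) (((1 - x) / 2 : ℝ) : ℂ)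

lemma one_sub_ofReal_sq_ne_zero {x : ℝ} (hx : x ∈ Set.Ioo (-1 : ℝ) 1) : 1 - (x : ℂ) ^ 2 ≠ 0 := by
  have : (1 - x ^ 2 : ℝ) ≠ 0 := by nlinarith [hx.1, hx.2]
  exact_mod_cast this

lemma hasDerivAt_ofReal_one_sub_div_two (x : ℝ) :
    HasDerivAt (fun x : ℝ => (((1 - x) / 2 : ℝ) : ℂ)) (-1 / 2) x := by
  simpa using (((hasDerivAt_id x).const_sub 1).div_const 2).ofReal_comp

lemma hasDerivAt_ordinaryHypergeometric_one_sub_div_two (a b c : ℂ) {x : ℝ}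
    (hx : x ∈ Set.Ioo (-1 : ℝ) 1) :
    HasDerivAt (fun x : ℝ => ₂F₁ a b c (((1 - x) / 2 : ℝ) : ℂ))
      (deriv (₂F₁ a b c) (((1 - x) / 2 : ℝ) : ℂ) * (-1 / 2)) x :=
  (hasDerivAt_ordinaryHypergeometric a b c (norm_ofReal_one_sub_div_two_lt_one hx)).comp x
    (hasDerivAt_ofReal_one_sub_div_two x)

theorem hasDerivAt_legendreP (ν : ℂ) {x : ℝ} (hx : x ∈ Set.Ioo (-1 : ℝ) 1) :
    HasDerivAt (legendreP ν) (legendreQuasiDeriv ν x / (1 - (x : ℂ) ^ 2)) x := by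
  have hrel := one_sub_mul_deriv_ordinaryHypergeometric (-ν) (ν + 1) one_add_natCast_ne_zero
    (norm_ofReal_one_sub_div_two_lt_one hx)
  have hderiv := (hasDerivAt_ordinaryHypergeometric_one_sub_div_two (-ν) (ν + 1) 1 hx)
    |>.congr_of_eventuallyEq (f₁ := legendreP ν) <| by
      filter_upwards [isOpen_Ioo.mem_nhds hx] with y hy
      exact legendreP_eq_ordinaryHypergeometric ν hy
  refine hderiv.congr_deriv ?_
  rw [eq_div_iff (one_sub_ofReal_sq_ne_zero hx), legendreQuasiDeriv]
  push_cast at hrel ⊢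
  linear_combination -(1 - (x : ℂ)) * hrel

theorem hasDerivAt_legendreQuasiDeriv (ν : ℂ) {x : ℝ} (hx : x ∈ Set.Ioo (-1 : ℝ) 1) :
    HasDerivAt (legendreQuasiDeriv ν) (-(ν * (ν + 1)) * legendreP ν x) x := by
  have hrel := mul_deriv_ordinaryHypergeometric_add_one (-ν) (ν + 1) one_add_natCast_ne_zero
    (norm_ofReal_one_sub_div_two_lt_one hx)
  refine (((hasDerivAt_ofReal_one_sub_div_two x).const_mul (2 * ν * (ν + 1))).mul
    (hasDerivAt_ordinaryHypergeometric_one_sub_div_two (-ν) (ν + 1) (1 + 1) hx)).congr_deriv ?_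
  rw [legendreP_eq_ordinaryHypergeometric ν hx]
  linear_combination -(ν * (ν + 1)) * hrel

theorem mul_legendreP_add_one (ν : ℂ) {x : ℝ} (hx : x ∈ Set.Ioo (-1 : ℝ) 1) :
    (ν + 1) * legendreP (ν + 1) x = (ν + 1) * x * legendreP ν x - legendreQuasiDeriv ν x := by
  have hrel := ordinaryHypergeometric_sub_one_add_one (neg_add_cancel_left ν 1)
    (norm_ofReal_one_sub_div_two_lt_one hx)
  rw [legendreP_eq_ordinaryHypergeometric _ hx, legendreP_eq_ordinaryHypergeometric _ hx,
    legendreQuasiDeriv, neg_add']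
  push_cast at hrel ⊢
  linear_combination hrel

lemma mul_legendreQuasiDeriv_add_one (ν : ℂ) {x : ℝ} (hx : x ∈ Set.Ioo (-1 : ℝ) 1) :
    (ν + 1) * legendreQuasiDeriv (ν + 1) x =
      (ν + 1) * ((ν + 1) * (1 - (x : ℂ) ^ 2) * legendreP ν x + x * legendreQuasiDeriv ν x) := by
  have hleft := (hasDerivAt_legendreP (ν + 1) hx).const_mul (ν + 1)
  have hright := ((Complex.ofRealCLM.hasDerivAt.const_mul (ν + 1)).mul
    (hasDerivAt_legendreP ν hx)).sub (hasDerivAt_legendreQuasiDeriv ν hx)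
  have hderiv := hleft.unique (hright.congr_of_eventuallyEq <| by
    filter_upwards [isOpen_Ioo.mem_nhds hx] with y hy
    exact mul_legendreP_add_one ν hy)
  have hne := one_sub_ofReal_sq_ne_zero hx
  simp only [Complex.ofRealCLM_apply, Complex.ofReal_one] at hderiv
  field_simp at hderiv
  linear_combination hderiv

theorem mul_legendreP_add_two (ν : ℂ) {x : ℝ} (hx : x ∈ Set.Ioo (-1 : ℝ) 1) :
    (ν + 1) * (ν + 2) * legendreP (ν + 2) x =
      ((2 * ν + 3) * (x : ℂ) ^ 2 - (ν + 1)) * ((ν + 1) * legendreP ν x) -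
        (2 * ν + 3) * x * legendreQuasiDeriv ν x := by
  have hraise := mul_legendreP_add_one (ν + 1) hx
  rw [add_assoc, one_add_one_eq_two] at hraise
  linear_combination (ν + 1) * hraise + (ν + 2) * x * mul_legendreP_add_one ν hx -
    mul_legendreQuasiDeriv_add_one ν hx

/-! ### The telescoping certificate -/

/-- The symmetric trilinear form on `ℂ²` with coefficients `a`, evaluated at
`((f, F), (f, F), (g, G))`. -/
def cubicPolarization (a : Fin 4 → ℂ) (f F g G : ℂ) : ℂ :=
  a 0 * (f ^ 2 * g) + a 1 * (2 * f * F * g + f ^ 2 * G) + a 2 * (F ^ 2 * g + 2 * f * F * G) +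
    a 3 * (F ^ 2 * G)

lemma hasDerivAt_cubicPolarization {a : Fin 4 → ℝ → ℂ} {a' : Fin 4 → ℂ} {f F g G : ℝ → ℂ}
    {p q : ℂ} {x : ℝ} (ha : ∀ i, HasDerivAt (a i) (a' i) x)
    (hf : HasDerivAt f (p * F x) x) (hF : HasDerivAt F (q * f x) x)
    (hg : HasDerivAt g (p * G x) x) (hG : HasDerivAt G (q * g x) x) :
    HasDerivAt (fun x => cubicPolarization (a · x) (f x) (F x) (g x) (G x))
      (cubicPolarization ![a' 0 + 3 * q * a 1 x, a' 1 + p * a 0 x + 2 * q * a 2 x,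
        a' 2 + 2 * p * a 1 x + q * a 3 x, a' 3 + 3 * p * a 2 x] (f x) (F x) (g x) (G x)) x := by
  have h0 := (ha 0).mul ((hf.pow 2).mul hg)
  have h1 := (ha 1).mul ((((hf.const_mul 2).mul hF).mul hg).add ((hf.pow 2).mul hG))
  have h2 := (ha 2).mul (((hF.pow 2).mul hg).add (((hf.const_mul 2).mul hF).mul hG))
  have h3 := (ha 3).mul ((hF.pow 2).mul hG)
  refine (((h0.add h1).add h2).add h3).congr_deriv ?_
  simp only [cubicPolarization, Matrix.cons_val, Pi.add_apply, Pi.mul_apply, Pi.pow_apply]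
  push_cast
  ring

open Polynomial in
/-- The coefficients of the certificate that telescopes the recurrence in the degree for
`∫ P_ν(x)² P_ν(-x) dx`. They were found by solving the linear system of ordinary differential
equations that `hasDerivAt_cubicPolarization` imposes on polynomial coefficients. -/
noncomputable def certificateCoeff (n : ℂ) : Fin 4 → ℂ[X] := ![
  (1 - X ^ 2) * (C (2 * n + 3) * X * (C (-(n + 1) ^ 2 * (9 * n + 17)) +
    C (2 * (2 * n + 3) * (3 * n ^ 2 + 7 * n + 3)) * X ^ 2 -
    C ((2 * n + 3) ^ 2 * (3 * n + 5)) * X ^ 4)),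
  (1 - X ^ 2) * (C (2 * n + 3) * (C (3 * (n + 1) ^ 2 * (n + 2)) -
    C ((2 * n + 3) * (3 * n ^ 2 + 6 * n + 1)) * X ^ 2 +
    C ((2 * n + 3) ^ 2 * (3 * n + 5)) * X ^ 4)),
  (1 - X ^ 2) * (C (-(2 * n + 3) ^ 2) * X * (C (2 * (n + 2)) +
    C ((2 * n + 3) * (3 * n + 5)) * X ^ 2)),
  C (2 * n + 3) * (C (2 * (n + 2) * (3 * n ^ 2 + 9 * n + 7)) +
    C (3 * (n + 1) * (n + 2) * (2 * n + 3)) * X ^ 2 -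
    C ((2 * n + 3) ^ 2 * (3 * n + 5)) * X ^ 4)]

/-- The function whose derivative is the summand of the recurrence between degrees `n` and
`n + 2`. -/
noncomputable def legendreCertificate (n : ℂ) (x : ℝ) : ℂ :=
  cubicPolarization (fun i => (certificateCoeff n i).eval (x : ℂ))
    ((n + 1) * legendreP n x) (legendreQuasiDeriv n x)
    ((n + 1) * legendreP n (-x)) (-legendreQuasiDeriv n (-x))

lemma certificateCoeff_ode (n : ℂ) {x : ℂ} (hx : 1 - x ^ 2 ≠ 0) (f F g G : ℂ) :
    cubicPolarization ![
        (certificateCoeff n 0).derivative.eval x + 3 * (-n) * (certificateCoeff n 1).eval x,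
        (certificateCoeff n 1).derivative.eval x +
          (n + 1) / (1 - x ^ 2) * (certificateCoeff n 0).eval x +
          2 * (-n) * (certificateCoeff n 2).eval x,
        (certificateCoeff n 2).derivative.eval x +
          2 * ((n + 1) / (1 - x ^ 2)) * (certificateCoeff n 1).eval x +
          (-n) * (certificateCoeff n 3).eval x,
        (certificateCoeff n 3).derivative.eval x +
          3 * ((n + 1) / (1 - x ^ 2)) * (certificateCoeff n 2).eval x] f F g G =
      (3 * n + 5) * (3 * n + 7) *
        ((((2 * n + 3) * x ^ 2 - (n + 1)) * f + -((2 * n + 3) * x) * F) ^ 2 *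
          (((2 * n + 3) * x ^ 2 - (n + 1)) * g + -((2 * n + 3) * x) * G)) -
        (n + 1) ^ 2 * (n + 2) * (3 * n + 2) * (3 * n + 4) * (f ^ 2 * g) := by
  simp only [cubicPolarization, certificateCoeff, Matrix.cons_val, Polynomial.derivative_mul,
    Polynomial.derivative_add, Polynomial.derivative_sub, Polynomial.derivative_C,
    Polynomial.derivative_X, Polynomial.derivative_X_pow, Polynomial.derivative_one,
    Polynomial.eval_mul, Polynomial.eval_add, Polynomial.eval_sub, Polynomial.eval_C,
    Polynomial.eval_X, Polynomial.eval_pow, Polynomial.eval_one, Polynomial.eval_zero]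
  field_simp
  ring

lemma neg_mem_Ioo_neg_one_one {x : ℝ} (hx : x ∈ Set.Ioo (-1 : ℝ) 1) : -x ∈ Set.Ioo (-1 : ℝ) 1 :=
  ⟨neg_lt_neg hx.2, neg_lt.mp hx.1⟩

theorem hasDerivAt_legendreCertificate (n : ℂ) {x : ℝ} (hx : x ∈ Set.Ioo (-1 : ℝ) 1) :
    HasDerivAt (legendreCertificate n)
      ((3 * n + 5) * (3 * n + 7) * ((n + 1) * (n + 2)) ^ 3 *
          (legendreP (n + 2) x ^ 2 * legendreP (n + 2) (-x)) -
        (n + 1) ^ 5 * (n + 2) * (3 * n + 2) * (3 * n + 4) *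
          (legendreP n x ^ 2 * legendreP n (-x))) x := by
  have hneg := neg_mem_Ioo_neg_one_one hx
  have hf : HasDerivAt (fun x : ℝ => (n + 1) * legendreP n x)
      ((n + 1) / (1 - (x : ℂ) ^ 2) * legendreQuasiDeriv n x) x :=
    ((hasDerivAt_legendreP n hx).const_mul (n + 1)).congr_deriv (by ring)
  have hF : HasDerivAt (legendreQuasiDeriv n) (-n * ((n + 1) * legendreP n x)) x :=
    (hasDerivAt_legendreQuasiDeriv n hx).congr_deriv (by ring)
  have hg : HasDerivAt (fun x : ℝ => (n + 1) * legendreP n (-x))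
      ((n + 1) / (1 - (x : ℂ) ^ 2) * -legendreQuasiDeriv n (-x)) x :=
    (((hasDerivAt_legendreP n hneg).scomp x (hasDerivAt_neg x)).const_mul (n + 1)).congr_deriv
      (by
        simp only [Complex.ofReal_neg, even_two, Even.neg_pow, neg_smul, one_smul]
        ring)
  have hG : HasDerivAt (fun x : ℝ => -legendreQuasiDeriv n (-x))
      (-n * ((n + 1) * legendreP n (-x))) x :=
    ((hasDerivAt_legendreQuasiDeriv n hneg).scomp x (hasDerivAt_neg x)).neg.congr_deriv
      (by
        simp only [neg_mul, smul_neg, neg_smul, one_smul, neg_neg]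
        ring)
  refine (hasDerivAt_cubicPolarization
    (fun i => ((certificateCoeff n i).hasDerivAt (x : ℂ)).comp_ofReal) hf hF hg hG).congr_deriv ?_
  have hraise := mul_legendreP_add_two n hx
  have hraise_neg := mul_legendreP_add_two n hneg
  rw [certificateCoeff_ode n (one_sub_ofReal_sq_ne_zero hx)]
  push_cast at hraise hraise_neg
  have hexpand : ((n + 1) * (n + 2)) ^ 3 *
      (legendreP (n + 2) x ^ 2 * legendreP (n + 2) (-x)) =
      ((n + 1) * (n + 2) * legendreP (n + 2) x) ^ 2 *
        ((n + 1) * (n + 2) * legendreP (n + 2) (-x)) := by ring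
  rw [mul_assoc (_ * _) (((n + 1) * (n + 2)) ^ 3), hexpand, hraise, hraise_neg]
  ring

/-! ### Growth in the degree and at the endpoints -/

lemma intervalIntegrable_one_sub_sq_rpow {r : ℝ} (hr : -1 < r) :
    IntervalIntegrable (fun x : ℝ => (1 - x ^ 2) ^ r) volume (-1) 1 := by
  have hright : IntervalIntegrable (fun x : ℝ => (1 - x ^ 2) ^ r) volume 0 1 := by
    have hsing : IntervalIntegrable (fun x : ℝ => (1 - x) ^ r) volume 0 1 := by
      simpa using ((intervalIntegrable_rpow' hr).comp_sub_left (a := 0) (b := 1) 1).symm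
    have hcont : ContinuousOn (fun x : ℝ => (1 + x) ^ r) (Set.uIcc 0 1) := fun x hx => by
      rw [Set.uIcc_of_le zero_le_one] at hx
      exact ContinuousAt.continuousWithinAt <|
        (by fun_prop : ContinuousAt (1 + ·) x).rpow_const (.inl (by linarith [hx.1]))
    refine (hsing.mul_continuousOn hcont).congr fun x hx => ?_
    rw [Set.uIoc_of_le zero_le_one] at hx
    rw [← mul_rpow (by linarith [hx.2]) (by linarith [hx.1])]
    ring_nf
  have hleft : IntervalIntegrable (fun x : ℝ => (1 - x ^ 2) ^ r) volume (-1) 0 := by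
    simpa using ((IntervalIntegrable.iff_comp_neg).mp hright).symm
  exact hleft.trans hright

lemma intervalIntegrable_sin_rpow {r : ℝ} (hr : -1 < r) :
    IntervalIntegrable (fun x : ℝ => sin x ^ r) volume 0 (π / 2) := by
  have hsinc_pos : ∀ x ∈ Set.Icc 0 (π / 2), 0 < sinc x := fun x hx => by
    rcases hx.1.eq_or_lt with rfl | hx0
    · simp
    · rw [sinc_of_ne_zero hx0.ne']
      exact div_pos (sin_pos_of_pos_of_lt_pi hx0 (by linarith [hx.2, pi_pos])) hx0
  have hcont : ContinuousOn (fun x => sinc x ^ r) (Set.uIcc 0 (π / 2)) := by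
    rw [Set.uIcc_of_le (by positivity)]
    exact continuous_sinc.continuousOn.rpow_const fun x hx => .inl (hsinc_pos x hx).ne'
  refine ((intervalIntegrable_rpow' hr).mul_continuousOn hcont).congr fun x hx => ?_
  rw [Set.uIoc_of_le (by positivity)] at hx
  rw [← mul_rpow hx.1.le (hsinc_pos x ⟨hx.1.le, hx.2⟩).le, sinc_of_ne_zero hx.1.ne',
    mul_div_cancel₀ _ hx.1.ne']

lemma intervalIntegrable_cos_rpow {r : ℝ} (hr : -1 < r) :
    IntervalIntegrable (fun x : ℝ => cos x ^ r) volume 0 (π / 2) := by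
  simpa [sin_pi_div_two_sub] using ((intervalIntegrable_sin_rpow hr).comp_sub_left (π / 2)).symm

lemma norm_complex_cos_le (z : ℂ) : ‖Complex.cos z‖ ≤ rexp |z.im| := by
  have hle := norm_add_le (Complex.exp (z * Complex.I)) (Complex.exp (-z * Complex.I))
  simp only [Complex.norm_exp, Complex.mul_I_re, Complex.neg_im, neg_neg] at hle
  rw [Complex.cos, norm_div, Complex.norm_ofNat, div_le_iff₀ two_pos]
  linarith [exp_le_exp.mpr (neg_le_abs z.im), exp_le_exp.mpr (le_abs_self z.im)]

lemma abs_im_mul_arcsin_le (ν : ℂ) {x : ℝ} (hx : x ∈ Set.Ioo (-1 : ℝ) 1) {t : ℝ}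
    (ht : t ∈ Set.Icc 0 1) :
    |((2 * ν + 1) * (arcsin (√((1 - x) / 2) * t) : ℂ)).im| ≤ |ν.im| * arccos x := by
  have hmono : arcsin (√((1 - x) / 2) * t) ≤ arcsin √((1 - x) / 2) :=
    monotone_arcsin (mul_le_of_le_one_right (sqrt_nonneg _) ht.2)
  have hnonneg : 0 ≤ arcsin (√((1 - x) / 2) * t) :=
    arcsin_nonneg.mpr (mul_nonneg (sqrt_nonneg _) ht.1)
  have him : (2 * ν + 1).im = 2 * ν.im := by simp
  calc |((2 * ν + 1) * (arcsin (√((1 - x) / 2) * t) : ℂ)).im|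
      = |ν.im| * (2 * arcsin (√((1 - x) / 2) * t)) := by
        rw [Complex.im_mul_ofReal, him, abs_mul, abs_mul, abs_two, abs_of_nonneg hnonneg]
        ring
    _ ≤ |ν.im| * (2 * arcsin √((1 - x) / 2)) := by gcongr
    _ = |ν.im| * arccos x := by rw [arccos_eq_two_mul_arcsin_sqrt ⟨hx.1.le, hx.2.le⟩]

-- AM-GM: `1 - s² sin² φ = (1 - s²) + s² cos² φ ≥ 2 s √(1 - s²) cos φ` with `s² = (1 - x) / 2`.
lemma sqrt_one_sub_sq_mul_cos_le {x : ℝ} (hx : x ∈ Set.Ioo (-1 : ℝ) 1) (φ : ℝ) :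
    √(1 - x ^ 2) * cos φ ≤ 1 - (√((1 - x) / 2) * sin φ) ^ 2 := by
  have hsub : 0 ≤ (1 - x) / 2 := by linarith [hx.2]
  have hadd : 0 ≤ (1 + x) / 2 := by linarith [hx.1]
  have hprod : √(1 - x ^ 2) = 2 * (√((1 - x) / 2) * √((1 + x) / 2)) := by
    rw [← sqrt_mul hsub, sqrt_eq_iff_mul_self_eq (by nlinarith) (by positivity)]
    nlinarith [sq_sqrt (mul_nonneg hsub hadd)]
  rw [hprod]
  nlinarith [sq_nonneg (√((1 + x) / 2) - √((1 - x) / 2) * cos φ), sin_sq_add_cos_sq φ,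
    sq_sqrt hsub, sq_sqrt hadd]

lemma norm_mehlerKernel_le (ν : ℂ) {x : ℝ} (hx : x ∈ Set.Ioo (-1 : ℝ) 1) {φ : ℝ}
    (hφ : φ ∈ Set.Ico 0 (π / 2)) :
    ‖mehlerKernel ν (√((1 - x) / 2) * sin φ)‖ ≤
      rexp (|ν.im| * arccos x) * (1 - x ^ 2) ^ (-1 / 4 : ℝ) * cos φ ^ (-1 / 2 : ℝ) := by
  have hpi := pi_pos
  have hsin : 0 ≤ sin φ := sin_nonneg_of_mem_Icc ⟨hφ.1, by linarith [hφ.2]⟩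
  have hcos : 0 < cos φ := cos_pos_of_mem_Ioo ⟨by linarith [hφ.1], hφ.2⟩
  have hw : 0 < 1 - x ^ 2 := by nlinarith [hx.1, hx.2]
  have hdenom := sqrt_one_sub_sq_mul_cos_le hx φ
  have hroot : (√(1 - (√((1 - x) / 2) * sin φ) ^ 2))⁻¹ ≤
      (1 - x ^ 2) ^ (-1 / 4 : ℝ) * cos φ ^ (-1 / 2 : ℝ) := by
    rw [sqrt_eq_rpow (1 - _), ← rpow_neg (le_trans (by positivity) hdenom)]
    calc (1 - (√((1 - x) / 2) * sin φ) ^ 2) ^ (-(1 / 2) : ℝ)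
        ≤ (√(1 - x ^ 2) * cos φ) ^ (-(1 / 2) : ℝ) :=
          rpow_le_rpow_of_nonpos (by positivity) hdenom (by norm_num)
      _ = _ := by
          rw [mul_rpow (by positivity) hcos.le, sqrt_eq_rpow, ← rpow_mul hw.le]
          norm_num
  rw [mehlerKernel, norm_div, Complex.norm_of_nonneg (sqrt_nonneg _), div_eq_mul_inv, mul_assoc]
  gcongr
  exact (norm_complex_cos_le _).trans
    (exp_le_exp.mpr (abs_im_mul_arcsin_le ν hx ⟨hsin, sin_le_one φ⟩))

theorem exists_norm_legendreP_le : ∃ C : ℝ, 0 ≤ C ∧ ∀ ν : ℂ, ∀ x ∈ Set.Ioo (-1 : ℝ) 1,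
    ‖legendreP ν x‖ ≤ C * (rexp (|ν.im| * arccos x) * (1 - x ^ 2) ^ (-1 / 4 : ℝ)) := by
  have hpi : 0 ≤ π / 2 := by positivity
  refine ⟨2 / π * ∫ φ in (0 : ℝ)..π / 2, cos φ ^ (-1 / 2 : ℝ),
    mul_nonneg (by positivity) (integral_nonneg hpi fun φ hφ =>
      rpow_nonneg (cos_nonneg_of_mem_Icc ⟨by linarith [hφ.1], hφ.2⟩) _), fun ν x hx => ?_⟩
  have hle := intervalIntegral.norm_integral_le_of_norm_le (μ := volume) hpi
    (f := fun φ => mehlerKernel ν (√((1 - x) / 2) * sin φ))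
    (g := fun φ => rexp (|ν.im| * arccos x) * (1 - x ^ 2) ^ (-1 / 4 : ℝ) *
      cos φ ^ (-1 / 2 : ℝ))
    (by
      filter_upwards [Measure.ae_ne volume (π / 2)] with φ hne hφ
      exact norm_mehlerKernel_le ν hx ⟨hφ.1.le, hφ.2.lt_of_ne hne⟩)
    ((intervalIntegrable_cos_rpow (by norm_num)).const_mul _)
  rw [intervalIntegral.integral_const_mul] at hle
  rw [legendreP_eq_integral_mehlerKernel ν hx, norm_mul, Complex.norm_of_nonneg (by positivity),
    mul_assoc (2 / π), mul_comm (∫ φ in (0 : ℝ)..π / 2, _)]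
  gcongr

section EndpointAsymptotics

open Asymptotics Filter Set
open scoped Topology

lemma one_sub_sq_pos {x : ℝ} (hx : x ∈ Ioo (-1 : ℝ) 1) : 0 < 1 - x ^ 2 := by
  nlinarith [hx.1, hx.2]

lemma tendsto_neg_principal_Ioo :
    Tendsto (fun x : ℝ => -x) (𝓟 (Ioo (-1) 1)) (𝓟 (Ioo (-1) 1)) :=
  tendsto_principal_principal.mpr fun _ hx => neg_mem_Ioo_neg_one_one hx

theorem legendreP_isBigO (ν : ℂ) :
    legendreP ν =O[𝓟 (Ioo (-1) 1)] fun x => (1 - x ^ 2) ^ (-1 / 4 : ℝ) := by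
  obtain ⟨C, hC, hbound⟩ := exists_norm_legendreP_le
  refine .of_bound (C * rexp (|ν.im| * π)) (eventually_principal.mpr fun x hx => ?_)
  rw [Real.norm_of_nonneg (rpow_nonneg (one_sub_sq_pos hx).le _), mul_assoc]
  refine (hbound ν x hx).trans ?_
  gcongr
  · exact rpow_nonneg (one_sub_sq_pos hx).le _
  · exact arccos_le_pi x

theorem legendreQuasiDeriv_isBigO (ν : ℂ) :
    legendreQuasiDeriv ν =O[𝓟 (Ioo (-1) 1)] fun x => (1 - x ^ 2) ^ (-1 / 4 : ℝ) := by
  have hx : (fun x : ℝ => (x : ℂ)) =O[𝓟 (Ioo (-1) 1)] fun _ => (1 : ℝ) :=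
    .of_bound 1 (eventually_principal.mpr fun x hx => by
      simpa using (abs_lt.mpr ⟨hx.1, hx.2⟩).le)
  have hP : (fun x : ℝ => (ν + 1) * (x * legendreP ν x)) =O[𝓟 (Ioo (-1) 1)]
      fun x => (1 - x ^ 2) ^ (-1 / 4 : ℝ) := by
    simpa only [one_mul] using (hx.mul (legendreP_isBigO ν)).const_mul_left (ν + 1)
  refine (hP.sub ((legendreP_isBigO (ν + 1)).const_mul_left (ν + 1))).congr'
    (eventuallyEq_principal.mpr fun x hx => ?_) .rfl
  linear_combination -mul_legendreP_add_one ν hx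

theorem legendreQuasiDeriv_isBigO_one_sub_sq (ν : ℂ) :
    legendreQuasiDeriv ν =O[𝓝[Ioo (-1) 1] 1] fun x => 1 - x ^ 2 := by
  have hcont : ContinuousAt (fun x : ℝ => 2 * ν * (ν + 1) *
      ₂F₁ (-ν) (ν + 1) (1 + 1) (((1 - x) / 2 : ℝ) : ℂ)) 1 := by
    have hseries : ContinuousAt (₂F₁ (-ν) (ν + 1) (1 + 1)) (((1 - (1 : ℝ)) / 2 : ℝ) : ℂ) :=
      (hasDerivAt_ordinaryHypergeometric _ _ _ (by simp)).continuousAt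
    exact continuousAt_const.mul <| hseries.comp (f := fun x : ℝ => (((1 - x) / 2 : ℝ) : ℂ))
      (by fun_prop)
  have hfactor : (fun x : ℝ => (((1 - x) / 2 : ℝ) : ℂ)) =O[𝓝[Ioo (-1) 1] 1]
      fun x => 1 - x ^ 2 := by
    refine .of_bound 1 ?_
    filter_upwards [self_mem_nhdsWithin, nhdsWithin_le_nhds (Ioi_mem_nhds one_pos)] with x hx hx0
    rw [Complex.norm_real, Real.norm_of_nonneg (by linarith [hx.2]),
      Real.norm_of_nonneg (one_sub_sq_pos hx).le]
    nlinarith [hx.2, mem_Ioi.mp hx0]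
  refine ((hcont.tendsto.mono_left nhdsWithin_le_nhds).isBigO_one ℝ |>.mul hfactor).congr
    (fun x => ?_) fun x => one_mul _
  rw [legendreQuasiDeriv]
  ring

/-- One of the two factors vanishes at each endpoint, which compensates the singularity of the
other. -/
lemma legendreQuasiDeriv_mul_neg_isBigO (ν : ℂ) {a : ℝ} (ha : a = 1 ∨ a = -1) :
    (fun x => legendreQuasiDeriv ν x * legendreQuasiDeriv ν (-x)) =O[𝓝[Ioo (-1) 1] a]
      fun x => (1 - x ^ 2) * (1 - x ^ 2) ^ (-1 / 4 : ℝ) := by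
  have hgrow := (legendreQuasiDeriv_isBigO ν).mono
    (inf_le_right : 𝓝[Ioo (-1) 1] a ≤ 𝓟 (Ioo (-1) 1))
  have hgrow_neg := ((legendreQuasiDeriv_isBigO ν).comp_tendsto tendsto_neg_principal_Ioo).mono
    (inf_le_right : 𝓝[Ioo (-1) 1] a ≤ 𝓟 (Ioo (-1) 1))
  simp only [Function.comp_def, neg_sq] at hgrow_neg
  rcases ha with rfl | rfl
  · exact (legendreQuasiDeriv_isBigO_one_sub_sq ν).mul hgrow_neg
  · have hneg : Tendsto (fun x : ℝ => -x) (𝓝[Ioo (-1) 1] (-1)) (𝓝[Ioo (-1) 1] 1) := by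
      refine tendsto_nhdsWithin_iff.mpr ⟨?_, ?_⟩
      · simpa using (continuous_neg.tendsto (-1 : ℝ)).mono_left nhdsWithin_le_nhds
      · filter_upwards [self_mem_nhdsWithin] with x hx using neg_mem_Ioo_neg_one_one hx
    have hvanish := (legendreQuasiDeriv_isBigO_one_sub_sq ν).comp_tendsto hneg
    simp only [Function.comp_def, neg_sq] at hvanish
    exact (hvanish.mul hgrow).congr_left fun x => mul_comm _ _

lemma tendsto_one_sub_sq_mul_rpow_pow {a : ℝ} (ha : a = 1 ∨ a = -1) {k : ℕ} (hk : k < 4) :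
    Tendsto (fun x : ℝ => (1 - x ^ 2) * ((1 - x ^ 2) ^ (-1 / 4 : ℝ)) ^ k)
      (𝓝[Ioo (-1) 1] a) (𝓝 0) := by
  have hexp : 0 < 1 - (k : ℝ) / 4 := by
    have : (k : ℝ) < 4 := by exact_mod_cast hk
    linarith
  have hcont : ContinuousAt (fun x : ℝ => (1 - x ^ 2) ^ (1 - (k : ℝ) / 4)) a :=
    (by fun_prop : ContinuousAt (fun x : ℝ => 1 - x ^ 2) a).rpow_const (.inr hexp.le)
  have hzero : 1 - a ^ 2 = 0 := by rcases ha with rfl | rfl <;> norm_num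
  have hlim := hcont.tendsto.mono_left (nhdsWithin_le_nhds (s := Ioo (-1) 1))
  rw [hzero, zero_rpow hexp.ne'] at hlim
  refine hlim.congr' ?_
  filter_upwards [self_mem_nhdsWithin] with x hx
  rw [← rpow_mul_natCast (one_sub_sq_pos hx).le, ← rpow_one_add' (one_sub_sq_pos hx).le]
  · ring_nf
  · linarith

lemma eval_certificateCoeff_isBigO_one (n : ℂ) (i : Fin 4) (a : ℝ) :
    (fun x : ℝ => (certificateCoeff n i).eval (x : ℂ)) =O[𝓝[Ioo (-1) 1] a] fun _ => (1 : ℝ) :=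
  ((((certificateCoeff n i).continuous.comp Complex.continuous_ofReal).tendsto a).mono_left
    nhdsWithin_le_nhds).isBigO_one ℝ

lemma eval_certificateCoeff_isBigO (n : ℂ) {i : Fin 4} (hi : i ≠ 3) (a : ℝ) :
    (fun x : ℝ => (certificateCoeff n i).eval (x : ℂ)) =O[𝓝[Ioo (-1) 1] a]
      fun x => 1 - x ^ 2 := by
  obtain ⟨q, hq⟩ : (1 - Polynomial.X ^ 2 : Polynomial ℂ) ∣ certificateCoeff n i := by
    fin_cases i
    iterate 3 exact dvd_mul_right _ _
    exact absurd rfl hi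
  have hq_bounded : (fun x : ℝ => q.eval (x : ℂ)) =O[𝓝[Ioo (-1) 1] a] fun _ => (1 : ℝ) :=
    (((q.continuous.comp Complex.continuous_ofReal).tendsto a).mono_left
      nhdsWithin_le_nhds).isBigO_one ℝ
  have hw : (fun x : ℝ => 1 - (x : ℂ) ^ 2) =O[𝓝[Ioo (-1) 1] a] fun x => 1 - x ^ 2 :=
    (Complex.isBigO_ofReal_left.mpr (isBigO_refl (fun x : ℝ => 1 - x ^ 2) _)).congr_left
      fun x => by push_cast; rfl
  refine (hw.mul hq_bounded).congr (fun x => ?_) fun x => mul_one _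
  simp [hq]

theorem tendsto_legendreCertificate (n : ℂ) {a : ℝ} (ha : a = 1 ∨ a = -1) :
    Tendsto (legendreCertificate n) (𝓝[Ioo (-1) 1] a) (𝓝 0) := by
  have hle : 𝓝[Ioo (-1) 1] a ≤ 𝓟 (Ioo (-1) 1) := inf_le_right
  have hf := ((legendreP_isBigO n).const_mul_left (n + 1)).mono hle
  have hF := (legendreQuasiDeriv_isBigO n).mono hle
  have hg := (((legendreP_isBigO n).comp_tendsto tendsto_neg_principal_Ioo).const_mul_left
    (n + 1)).mono hle
  have hG := ((legendreQuasiDeriv_isBigO n).comp_tendsto tendsto_neg_principal_Ioo).neg_left.mono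
    hle
  simp only [Function.comp_def, neg_sq] at hg hG
  have hvanish {i : Fin 4} (hi : i ≠ 3) {φ₁ φ₂ φ₃ : ℝ → ℂ}
      (h₁ : φ₁ =O[𝓝[Ioo (-1) 1] a] fun x => (1 - x ^ 2) ^ (-1 / 4 : ℝ))
      (h₂ : φ₂ =O[𝓝[Ioo (-1) 1] a] fun x => (1 - x ^ 2) ^ (-1 / 4 : ℝ))
      (h₃ : φ₃ =O[𝓝[Ioo (-1) 1] a] fun x => (1 - x ^ 2) ^ (-1 / 4 : ℝ)) :
      Tendsto (fun x : ℝ => (certificateCoeff n i).eval (x : ℂ) * (φ₁ x * φ₂ x * φ₃ x))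
        (𝓝[Ioo (-1) 1] a) (𝓝 0) :=
    ((eval_certificateCoeff_isBigO n hi a).mul ((h₁.mul h₂).mul h₃)).trans_tendsto <|
      (tendsto_one_sub_sq_mul_rpow_pow ha (k := 3) (by norm_num)).congr fun x => by ring
  have hlast : Tendsto (fun x : ℝ => (certificateCoeff n 3).eval (x : ℂ) *
      (legendreQuasiDeriv n x * (legendreQuasiDeriv n x * legendreQuasiDeriv n (-x))))
      (𝓝[Ioo (-1) 1] a) (𝓝 0) :=
    ((eval_certificateCoeff_isBigO_one n 3 a).mul
      (hF.mul (legendreQuasiDeriv_mul_neg_isBigO n ha))).trans_tendsto <|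
      (tendsto_one_sub_sq_mul_rpow_pow ha (k := 2) (by norm_num)).congr fun x => by ring
  have hsum := (((((hvanish (i := 0) (by decide) hf hf hg).add
    ((hvanish (i := 1) (by decide) hf hF hg).const_mul 2)).add
    (hvanish (i := 1) (by decide) hf hf hG)).add (hvanish (i := 2) (by decide) hF hF hg)).add
    ((hvanish (i := 2) (by decide) hf hF hG).const_mul 2)).sub hlast
  simp only [mul_zero, add_zero, sub_zero] at hsum
  refine hsum.congr fun x => ?_
  rw [legendreCertificate, cubicPolarization]
  ring

end EndpointAsymptotics

/-! ### The integral as a function of the degree -/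

lemma differentiable_integral_of_dominated {α E : Type*} [MeasurableSpace α]
    [NormedAddCommGroup E] [NormedSpace ℂ E] {μ : Measure α} {F : ℂ → α → E}
    (hmeas : ∀ z, AEStronglyMeasurable (F z) μ)
    (hdiff : ∀ᵐ a ∂μ, Differentiable ℂ fun z => F z a)
    (hbound : ∀ R : ℝ, ∃ g : α → ℝ, Integrable g μ ∧ ∀ᵐ a ∂μ, ∀ z, ‖z‖ ≤ R → ‖F z a‖ ≤ g a) :
    Differentiable ℂ fun z => ∫ a, F z a ∂μ := by
  intro z₀
  obtain ⟨g, hg, hFg⟩ := hbound (‖z₀‖ + 2)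
  have hmeas_deriv : AEStronglyMeasurable (fun a => deriv (fun z => F z a) z₀) μ := by
    refine aestronglyMeasurable_of_tendsto_ae (nhdsWithin z₀ {z₀}ᶜ)
      (f := fun z a => slope (fun z => F z a) z₀ z)
      (fun z => ((hmeas z).sub (hmeas z₀)).const_smul (z - z₀)⁻¹) ?_
    filter_upwards [hdiff] with a ha
    exact hasDerivAt_iff_tendsto_slope.mp (ha z₀).hasDerivAt
  have hbound_deriv : ∀ᵐ a ∂μ, ∀ z ∈ Metric.ball z₀ 1, ‖deriv (fun z => F z a) z‖ ≤ g a := by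
    filter_upwards [hdiff, hFg] with a ha hFa z hz
    refine (Complex.norm_deriv_le_of_forall_mem_sphere_norm_le one_pos ha.diffContOnCl
      fun w hw => hFa w ?_).trans_eq (div_one _)
    rw [mem_sphere_iff_norm] at hw
    rw [mem_ball_iff_norm] at hz
    linarith [norm_sub_norm_le w z, norm_sub_norm_le z z₀]
  refine (hasDerivAt_integral_of_dominated_loc_of_deriv_le (bound := g)
    (F' := fun z a => deriv (fun z => F z a) z) (Metric.ball_mem_nhds z₀ one_pos)
    (.of_forall hmeas) (hg.mono' (hmeas z₀) ?_) hmeas_deriv hbound_deriv hg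
    ?_).2.differentiableAt
  · filter_upwards [hFg] with a ha using ha z₀ (by linarith)
  · filter_upwards [hdiff] with a ha z _ using (ha z).hasDerivAt

lemma continuous_mehlerKernel_mul_sin (ν : ℂ) {s : ℝ} (hs0 : 0 ≤ s) (hs1 : s < 1) :
    Continuous fun φ => mehlerKernel ν (s * sin φ) := by
  refine Continuous.div (by fun_prop) (by fun_prop) fun φ => ?_
  have hmem := mul_sin_mem_Ioo hs0 hs1 φ
  exact Complex.ofReal_ne_zero.mpr (sqrt_pos.mpr (by nlinarith [hmem.1, hmem.2])).ne'

lemma differentiable_legendreP {x : ℝ} (hx : x ∈ Set.Ioo (-1 : ℝ) 1) :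
    Differentiable ℂ fun ν => legendreP ν x := by
  have hpi : 0 ≤ π / 2 := by positivity
  obtain ⟨hs0, hs1⟩ := sqrt_one_sub_div_two_mem_Ioo hx
  simp only [legendreP_eq_integral_mehlerKernel _ hx, integral_of_le hpi,
    integral_Ioc_eq_integral_Ioo]
  refine (differentiable_integral_of_dominated
    (fun ν => (continuous_mehlerKernel_mul_sin ν hs0.le hs1).aestronglyMeasurable)
    (.of_forall fun φ => ?_) fun R => ⟨fun φ => rexp (R * arccos x) *
      (1 - x ^ 2) ^ (-1 / 4 : ℝ) * cos φ ^ (-1 / 2 : ℝ), ?_, ?_⟩).const_mul _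
  · unfold mehlerKernel
    fun_prop
  · exact ((intervalIntegrable_iff_integrableOn_Ioo_of_le hpi).mp
      (intervalIntegrable_cos_rpow (by norm_num))).const_mul _
  · refine ae_restrict_of_forall_mem measurableSet_Ioo fun φ hφ ν hν => ?_
    refine (norm_mehlerKernel_le ν hx ⟨hφ.1.le, hφ.2⟩).trans ?_
    have him := (Complex.abs_im_le_norm ν).trans hν
    have hw := one_sub_sq_pos hx
    have hcos := cos_pos_of_mem_Ioo ⟨by linarith [hφ.1, pi_pos], hφ.2⟩
    beta_reduce
    gcongr
    exact arccos_nonneg x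

lemma continuousOn_legendreP (ν : ℂ) : ContinuousOn (legendreP ν) (Set.Ioo (-1) 1) :=
  fun _ hx => (hasDerivAt_legendreP ν hx).continuousAt.continuousWithinAt

lemma continuousOn_legendreP_sq_mul_neg (ν : ℂ) :
    ContinuousOn (fun x => legendreP ν x ^ 2 * legendreP ν (-x)) (Set.Ioo (-1) 1) :=
  ((continuousOn_legendreP ν).pow 2).mul <|
    (continuousOn_legendreP ν).comp continuousOn_neg fun _ => neg_mem_Ioo_neg_one_one

theorem exists_norm_legendreP_sq_mul_neg_le : ∃ C : ℝ, 0 ≤ C ∧ ∀ ν : ℂ, ∀ x ∈ Set.Ioo (-1 : ℝ) 1,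
    ‖legendreP ν x ^ 2 * legendreP ν (-x)‖ ≤
      C * rexp (2 * π * |ν.im|) * (1 - x ^ 2) ^ (-3 / 4 : ℝ) := by
  obtain ⟨C, hC, hbound⟩ := exists_norm_legendreP_le
  refine ⟨C ^ 3, by positivity, fun ν x hx => ?_⟩
  have hP := hbound ν x hx
  have hP_neg := hbound ν (-x) (neg_mem_Ioo_neg_one_one hx)
  rw [arccos_neg, neg_sq] at hP_neg
  have hw := one_sub_sq_pos hx
  have hexp : rexp (|ν.im| * arccos x) ^ 2 * rexp (|ν.im| * (π - arccos x)) ≤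
      rexp (2 * π * |ν.im|) := by
    rw [← exp_nat_mul, ← exp_add, exp_le_exp]
    push_cast
    nlinarith [arccos_le_pi x, abs_nonneg ν.im]
  have hpow : ((1 - x ^ 2) ^ (-1 / 4 : ℝ)) ^ 3 = (1 - x ^ 2) ^ (-3 / 4 : ℝ) := by
    rw [← rpow_mul_natCast hw.le]
    norm_num
  rw [norm_mul, norm_pow, ← hpow]
  calc ‖legendreP ν x‖ ^ 2 * ‖legendreP ν (-x)‖
      ≤ (C * (rexp (|ν.im| * arccos x) * (1 - x ^ 2) ^ (-1 / 4 : ℝ))) ^ 2 *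
          (C * (rexp (|ν.im| * (π - arccos x)) * (1 - x ^ 2) ^ (-1 / 4 : ℝ))) := by gcongr
    _ = C ^ 3 * (rexp (|ν.im| * arccos x) ^ 2 * rexp (|ν.im| * (π - arccos x))) *
          ((1 - x ^ 2) ^ (-1 / 4 : ℝ)) ^ 3 := by ring
    _ ≤ _ := by gcongr

lemma intervalIntegrable_legendreP_sq_mul_neg (ν : ℂ) :
    IntervalIntegrable (fun x => legendreP ν x ^ 2 * legendreP ν (-x)) volume (-1) 1 := by
  obtain ⟨C, -, hbound⟩ := exists_norm_legendreP_sq_mul_neg_le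
  have hdom := (intervalIntegrable_one_sub_sq_rpow (r := -3 / 4) (by norm_num)).const_mul
    (C * rexp (2 * π * |ν.im|))
  rw [intervalIntegrable_iff_integrableOn_Ioo_of_le (by norm_num)] at hdom ⊢
  exact hdom.mono' ((continuousOn_legendreP_sq_mul_neg ν).aestronglyMeasurable measurableSet_Ioo)
    (ae_restrict_of_forall_mem measurableSet_Ioo (hbound ν))

/-- The left-hand side of the Clebsch–Gordan formula as a function of the degree. -/
noncomputable def legendreCubicIntegral (ν : ℂ) : ℂ :=
  ∫ x in (-1 : ℝ)..1, legendreP ν x ^ 2 * legendreP ν (-x)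

lemma legendreCubicIntegral_eq_integral_Ioo (ν : ℂ) :
    legendreCubicIntegral ν =
      ∫ x in Set.Ioo (-1 : ℝ) 1, legendreP ν x ^ 2 * legendreP ν (-x) := by
  rw [legendreCubicIntegral, integral_of_le (by norm_num), integral_Ioc_eq_integral_Ioo]

theorem differentiable_legendreCubicIntegral : Differentiable ℂ legendreCubicIntegral := by
  obtain ⟨C, hC, hbound⟩ := exists_norm_legendreP_sq_mul_neg_le
  rw [funext legendreCubicIntegral_eq_integral_Ioo]
  refine differentiable_integral_of_dominated
    (fun ν => (continuousOn_legendreP_sq_mul_neg ν).aestronglyMeasurable measurableSet_Ioo)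
    (ae_restrict_of_forall_mem measurableSet_Ioo fun x hx =>
      ((differentiable_legendreP hx).pow 2).mul
        (differentiable_legendreP (neg_mem_Ioo_neg_one_one hx)))
    fun R => ⟨fun x => C * rexp (2 * π * R) * (1 - x ^ 2) ^ (-3 / 4 : ℝ), ?_, ?_⟩
  · exact ((intervalIntegrable_iff_integrableOn_Ioo_of_le (by norm_num)).mp
      (intervalIntegrable_one_sub_sq_rpow (by norm_num))).const_mul _
  · refine ae_restrict_of_forall_mem measurableSet_Ioo fun x hx ν hν => (hbound ν x hx).trans ?_
    have him := (Complex.abs_im_le_norm ν).trans hν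
    have hw := one_sub_sq_pos hx
    beta_reduce
    gcongr

theorem exists_norm_legendreCubicIntegral_le :
    ∃ C : ℝ, 0 ≤ C ∧ ∀ ν : ℂ, ‖legendreCubicIntegral ν‖ ≤ C * rexp (2 * π * |ν.im|) := by
  obtain ⟨C, hC, hbound⟩ := exists_norm_legendreP_sq_mul_neg_le
  refine ⟨C * ∫ x in Set.Ioo (-1 : ℝ) 1, (1 - x ^ 2) ^ (-3 / 4 : ℝ),
    mul_nonneg hC (setIntegral_nonneg measurableSet_Ioo fun x hx =>
      rpow_nonneg (one_sub_sq_pos hx).le _), fun ν => ?_⟩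
  rw [legendreCubicIntegral_eq_integral_Ioo, mul_right_comm,
    ← MeasureTheory.integral_const_mul]
  exact norm_integral_le_of_norm_le
    (((intervalIntegrable_iff_integrableOn_Ioo_of_le (by norm_num)).mp
      (intervalIntegrable_one_sub_sq_rpow (by norm_num))).const_mul _)
    (ae_restrict_of_forall_mem measurableSet_Ioo (hbound ν))

lemma legendreCubicIntegral_neg_one_sub (ν : ℂ) :
    legendreCubicIntegral (-1 - ν) = legendreCubicIntegral ν := by
  simp only [legendreCubicIntegral, legendreP_neg_one_sub]

lemma legendreP_zero {x : ℝ} (hx : x ∈ Set.Ioo (-1 : ℝ) 1) : legendreP 0 x = 1 := by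
  have hsum := hasSum_ordinaryHypergeometric (-0) (0 + 1) 1 (norm_ofReal_one_sub_div_two_lt_one hx)
  rw [legendreP_eq_ordinaryHypergeometric 0 hx]
  refine (hsum.unique (hasSum_single 0 fun k hk => ?_)).trans ?_
  · rw [ordinaryHypergeometricCoefficient,
      (ascPochhammer_eval_eq_zero_iff k _).mpr ⟨0, Nat.pos_of_ne_zero hk, by simp⟩]
    ring
  · simp [ordinaryHypergeometricCoefficient]

lemma legendreCubicIntegral_zero : legendreCubicIntegral 0 = 2 := by
  have hone : Set.EqOn (fun x => legendreP 0 x ^ 2 * legendreP 0 (-x)) (fun _ => 1)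
      (Set.Ioo (-1) 1) := fun x hx => by
    simp [legendreP_zero hx, legendreP_zero (neg_mem_Ioo_neg_one_one hx)]
  rw [legendreCubicIntegral_eq_integral_Ioo, setIntegral_congr_fun measurableSet_Ioo hone]
  norm_num

theorem legendreCubicIntegral_add_two {ν : ℂ} (h1 : ν + 1 ≠ 0) (h2 : ν + 2 ≠ 0) :
    (ν + 2) ^ 2 * (3 * ν + 5) * (3 * ν + 7) * legendreCubicIntegral (ν + 2) =
      (ν + 1) ^ 2 * (3 * ν + 2) * (3 * ν + 4) * legendreCubicIntegral ν := by
  have hleft := tendsto_legendreCertificate ν (.inr rfl)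
  have hright := tendsto_legendreCertificate ν (.inl rfl)
  rw [nhdsWithin_Ioo_eq_nhdsGT (by norm_num)] at hleft
  rw [nhdsWithin_Ioo_eq_nhdsLT (by norm_num)] at hright
  have hint_add_two := (intervalIntegrable_legendreP_sq_mul_neg (ν + 2)).const_mul
    ((3 * ν + 5) * (3 * ν + 7) * ((ν + 1) * (ν + 2)) ^ 3)
  have hint := (intervalIntegrable_legendreP_sq_mul_neg ν).const_mul
    ((ν + 1) ^ 5 * (ν + 2) * (3 * ν + 2) * (3 * ν + 4))
  have htelescope := integral_eq_sub_of_hasDerivAt_of_tendsto (by norm_num)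
    (fun x hx => hasDerivAt_legendreCertificate ν hx) (hint_add_two.sub hint) hleft hright
  rw [integral_sub hint_add_two hint, intervalIntegral.integral_const_mul,
    intervalIntegral.integral_const_mul, ← legendreCubicIntegral, ← legendreCubicIntegral]
    at htelescope
  refine mul_left_cancel₀ (mul_ne_zero (pow_ne_zero 3 h1) h2) ?_
  linear_combination htelescope

/-! ### The Gamma side -/

lemma Gamma_one_half_add_mul_Gamma_one_half_sub (s : ℂ) :
    Complex.Gamma (1 / 2 + s) * Complex.Gamma (1 / 2 - s) = π / Complex.cos (π * s) := by
  have h := Complex.Gamma_mul_Gamma_one_sub (1 / 2 + s)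
  rwa [show 1 - (1 / 2 + s) = 1 / 2 - s by ring,
    show (π : ℂ) * (1 / 2 + s) = π * s + π / 2 by ring, Complex.sin_add_pi_div_two] at h

/-- The quotient `Γ(s) / Γ(s + 1/2)`, in terms of which the value of the cubic integral is
expressed. It is `0` by convention of division when `s + 1/2` is a pole of `Γ`. -/
noncomputable def gammaRatio (s : ℂ) : ℂ := Complex.Gamma s / Complex.Gamma (s + 1 / 2)

lemma gammaRatio_add_one {s : ℂ} (h : s ≠ 0) (h' : s + 1 / 2 ≠ 0) :
    gammaRatio (s + 1) = s / (s + 1 / 2) * gammaRatio s := by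
  rw [gammaRatio, gammaRatio, add_right_comm, Complex.Gamma_add_one _ h,
    Complex.Gamma_add_one _ h', mul_div_mul_comm]

lemma gammaRatio_one_half_sub {s : ℂ} (h : ∀ m : ℤ, 2 * s ≠ m) :
    gammaRatio (1 / 2 - s) = Complex.tan (π * s) * gammaRatio s := by
  have hsin : Complex.sin (2 * (π * s)) ≠ 0 := fun h0 => by
    obtain ⟨k, hk⟩ := Complex.sin_eq_zero_iff.mp h0
    exact h k (mul_right_cancel₀ (Complex.ofReal_ne_zero.mpr pi_ne_zero)
      (by linear_combination hk))
  have hG : Complex.Gamma s ≠ 0 :=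
    Complex.Gamma_ne_zero fun m hm => h (-2 * m) (by push_cast; linear_combination 2 * hm)
  have hG' : Complex.Gamma (1 / 2 + s) ≠ 0 := Complex.Gamma_ne_zero fun m hm =>
    h (-2 * m - 1) (by push_cast; linear_combination 2 * hm)
  rw [Complex.sin_two_mul] at hsin
  have h1 := eq_div_of_mul_eq hG ((mul_comm _ _).trans (Complex.Gamma_mul_Gamma_one_sub s))
  have h2 := eq_div_of_mul_eq hG'
    ((mul_comm _ _).trans (Gamma_one_half_add_mul_Gamma_one_half_sub s))
  rw [gammaRatio, gammaRatio, show 1 / 2 - s + 1 / 2 = 1 - s by ring, h1, h2,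
    Complex.tan_eq_sin_div_cos, add_comm s]
  field_simp [left_ne_zero_of_mul (left_ne_zero_of_mul hsin)]

lemma differentiableAt_Gamma_of_re_pos {s : ℂ} (hs : 0 < s.re) :
    DifferentiableAt ℂ Complex.Gamma s :=
  Complex.differentiableAt_Gamma s fun m hm => by
    have := congrArg Complex.re hm
    simp only [Complex.neg_re, Complex.natCast_re] at this
    linarith [m.cast_nonneg (α := ℝ)]

lemma re_add_one_half_pos {s : ℂ} (hs : 0 < s.re) : 0 < (s + 1 / 2).re := by
  rw [Complex.add_re]
  norm_num
  linarith

lemma gammaRatio_ne_zero {s : ℂ} (hs : 0 < s.re) : gammaRatio s ≠ 0 :=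
  div_ne_zero (Complex.Gamma_ne_zero_of_re_pos hs)
    (Complex.Gamma_ne_zero_of_re_pos (re_add_one_half_pos hs))

lemma differentiableAt_gammaRatio {s : ℂ} (hs : 0 < s.re) : DifferentiableAt ℂ gammaRatio s :=
  (differentiableAt_Gamma_of_re_pos hs).div
    (differentiableAt_comp_add_const.mpr
      (differentiableAt_Gamma_of_re_pos (re_add_one_half_pos hs)))
    (Complex.Gamma_ne_zero_of_re_pos (re_add_one_half_pos hs))

lemma norm_betaIntegral_add_le {s u v : ℂ} (hs : 0 ≤ s.re) (hu : 0 < u.re) (hv : 0 < v.re) :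
    ‖Complex.betaIntegral (s + u) v‖ ≤
      ∫ x in (0 : ℝ)..1, ‖(x : ℂ) ^ (u - 1) * (1 - (x : ℂ)) ^ (v - 1)‖ := by
  refine intervalIntegral.norm_integral_le_of_norm_le zero_le_one
    (Filter.Eventually.of_forall fun x hx => ?_) (Complex.betaIntegral_convergent hu hv).norm
  rw [norm_mul, norm_mul, Complex.norm_cpow_eq_rpow_re_of_pos hx.1,
    Complex.norm_cpow_eq_rpow_re_of_pos hx.1]
  gcongr ?_ * _
  refine rpow_le_rpow_of_exponent_ge hx.1 hx.2 ?_
  simp only [Complex.sub_re, Complex.add_re]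
  linarith

-- `Γ(s + 1/2) Γ(1/2) = s Γ(s) B(s + 1/2, 1/2)`, and the beta integral is bounded for `0 < re s`.
lemma exists_norm_inv_gammaRatio_le :
    ∃ K : ℝ, 0 ≤ K ∧ ∀ s : ℂ, 0 < s.re → ‖(gammaRatio s)⁻¹‖ ≤ K * ‖s‖ := by
  have hhalf : 0 < (1 / 2 : ℂ).re := by norm_num
  have hpos : 0 < ‖Complex.Gamma (1 / 2)‖ :=
    norm_pos_iff.mpr (Complex.Gamma_ne_zero_of_re_pos hhalf)
  set I : ℝ := ∫ x in (0 : ℝ)..1,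
    ‖(x : ℂ) ^ ((1 / 2 : ℂ) - 1) * (1 - (x : ℂ)) ^ ((1 / 2 : ℂ) - 1)‖
  have hI : 0 ≤ I := integral_nonneg zero_le_one fun x _ => norm_nonneg _
  refine ⟨I / ‖Complex.Gamma (1 / 2)‖, by positivity, fun s hs => ?_⟩
  have hs0 : s ≠ 0 := by rintro rfl; exact hs.ne rfl
  have hbeta := congrArg norm
    (Complex.Gamma_mul_Gamma_eq_betaIntegral (re_add_one_half_pos hs) hhalf)
  rw [show s + 1 / 2 + 1 / 2 = s + 1 by ring, Complex.Gamma_add_one s hs0, norm_mul, norm_mul,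
    norm_mul] at hbeta
  rw [gammaRatio, inv_div, norm_div, div_mul_eq_mul_div,
    div_le_div_iff₀ (norm_pos_iff.mpr (Complex.Gamma_ne_zero_of_re_pos hs)) hpos, hbeta]
  calc ‖s‖ * ‖Complex.Gamma s‖ * ‖Complex.betaIntegral (s + 1 / 2) (1 / 2)‖
      ≤ ‖s‖ * ‖Complex.Gamma s‖ * I := by
        gcongr
        exact norm_betaIntegral_add_le hs.le hhalf hhalf
    _ = I * ‖s‖ * ‖Complex.Gamma s‖ := by ring

lemma cos_re_eq (z : ℂ) : (Complex.cos z).re = cos z.re * cosh z.im := by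
  rw [Complex.cos_eq, ← Complex.ofReal_cos, ← Complex.ofReal_cosh, ← Complex.ofReal_sin,
    ← Complex.ofReal_sinh]
  rw [← Complex.ofReal_mul, ← Complex.ofReal_mul, Complex.sub_re, Complex.re_ofReal_mul,
    Complex.I_re, mul_zero, sub_zero, Complex.ofReal_re]

lemma exp_abs_div_two_le_cosh (x : ℝ) : rexp |x| / 2 ≤ cosh x := by
  rw [← cosh_abs, cosh_eq]
  linarith [exp_pos (-|x|)]

lemma exp_two_mul_abs_im_div_eight_le_norm_cos_sq {z : ℂ} (hz : |z.re| ≤ π / 4) :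
    rexp (2 * |z.im|) / 8 ≤ ‖Complex.cos z‖ ^ 2 := by
  have hcos : √2 / 2 ≤ cos z.re := by
    rw [← cos_pi_div_four, ← cos_abs z.re]
    exact cos_le_cos_of_nonneg_of_le_pi (abs_nonneg _) (by linarith [pi_pos]) hz
  have hre : √2 / 2 * (rexp |z.im| / 2) ≤ ‖Complex.cos z‖ :=
    calc √2 / 2 * (rexp |z.im| / 2) ≤ cos z.re * cosh z.im :=
          mul_le_mul hcos (exp_abs_div_two_le_cosh _) (by positivity)
            ((by positivity : 0 ≤ √2 / 2).trans hcos)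
      _ = (Complex.cos z).re := (cos_re_eq z).symm
      _ ≤ ‖Complex.cos z‖ := Complex.re_le_norm _
  calc rexp (2 * |z.im|) / 8 = (√2 / 2 * (rexp |z.im| / 2)) ^ 2 := by
        rw [two_mul, exp_add, mul_pow, div_pow, sq_sqrt zero_le_two]
        ring
    _ ≤ ‖Complex.cos z‖ ^ 2 := by gcongr

lemma one_add_two_mul_cos_two_mul (z : ℂ) :
    1 + 2 * Complex.cos (2 * z) = 4 * Complex.cos z ^ 2 - 1 := by
  rw [Complex.cos_two_mul]
  ring

lemma one_half_lt_cos_re {z : ℂ} (hz : |z.re| < π / 3) : 1 / 2 < (Complex.cos z).re := by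
  have hcos : 1 / 2 < cos z.re := by
    rw [← cos_pi_div_three, ← cos_abs z.re]
    exact cos_lt_cos_of_nonneg_of_le_pi (abs_nonneg _) (by linarith [pi_pos]) hz
  rw [cos_re_eq]
  nlinarith [one_le_cosh z.im]

lemma one_add_two_mul_cos_two_mul_ne_zero {z : ℂ} (hz : |z.re| < π / 3) :
    1 + 2 * Complex.cos (2 * z) ≠ 0 := fun h => by
  have hre := one_half_lt_cos_re hz
  rw [one_add_two_mul_cos_two_mul] at h
  have hsq : Complex.cos z ^ 2 = (1 / 2) ^ 2 := by linear_combination h / 4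
  rcases sq_eq_sq_iff_eq_or_eq_neg.mp hsq with h | h <;> norm_num [h] at hre

lemma exp_two_mul_abs_im_div_four_le_norm_one_add_two_mul_cos {z : ℂ} (hz : |z.re| ≤ π / 4) :
    rexp (2 * |z.im|) / 4 ≤ ‖1 + 2 * Complex.cos (2 * z)‖ := by
  have hone : 1 ≤ ‖1 + 2 * Complex.cos (2 * z)‖ := by
    refine le_trans ?_ (Complex.re_le_norm _)
    have hcos : 0 ≤ cos (2 * z.re) := by
      rw [abs_le] at hz
      exact cos_nonneg_of_neg_pi_div_two_le_of_le (by linarith) (by linarith)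
    have hre : (1 + 2 * Complex.cos (2 * z)).re = 1 + 2 * (cos (2 * z.re) * cosh (2 * z.im)) := by
      have hre2 : (2 * z).re = 2 * z.re := by simp
      have him2 : (2 * z).im = 2 * z.im := by simp
      rw [two_mul (Complex.cos _), Complex.add_re, Complex.add_re, Complex.one_re, cos_re_eq, hre2,
        him2]
      ring
    rw [hre]
    linarith [mul_nonneg hcos (cosh_pos (2 * z.im)).le]
  have hexp : rexp (2 * |z.im|) / 2 - 1 ≤ ‖1 + 2 * Complex.cos (2 * z)‖ := by
    have hsub := norm_sub_norm_le (4 * Complex.cos z ^ 2) 1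
    rw [norm_mul, norm_pow, Complex.norm_ofNat, norm_one] at hsub
    rw [one_add_two_mul_cos_two_mul]
    linarith [exp_two_mul_abs_im_div_eight_le_norm_cos_sq hz]
  linarith

/-- The Gamma-function value of the cubic integral, written in terms of `gammaRatio`. The
reflection formula has been used to clear the factor `Γ((1 - ν)/2)`, so that for `-2/3 < re ν`
no pole of `Γ` occurs. -/
noncomputable def clebschGordanValue (ν : ℂ) : ℂ :=
  (1 + 2 * Complex.cos (π * ν)) * Complex.cos (π * ν / 2) ^ 2 / (3 * π) *
    (gammaRatio ((ν + 1) / 2) ^ 3 * gammaRatio ((3 * ν + 2) / 2))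

lemma clebschGordanValue_zero : clebschGordanValue 0 = 2 := by
  have hsq : Complex.Gamma (1 / 2) ^ 2 = π := by
    simpa [sq] using Gamma_one_half_add_mul_Gamma_one_half_sub 0
  have hhalf : gammaRatio (1 / 2) = Complex.Gamma (1 / 2) := by
    norm_num [gammaRatio]
  have hone : gammaRatio 1 = 2 / Complex.Gamma (1 / 2) := by
    rw [gammaRatio, add_comm, Complex.Gamma_add_one _ (by norm_num), Complex.Gamma_one]
    field_simp
  have hpi : (π : ℂ) ≠ 0 := Complex.ofReal_ne_zero.mpr pi_ne_zero
  have hG : Complex.Gamma (1 / 2) ≠ 0 := pow_ne_zero_iff two_ne_zero |>.mp (hsq ▸ hpi)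
  calc clebschGordanValue 0
      = 3 / (3 * π) * (gammaRatio (1 / 2) ^ 3 * gammaRatio 1) := by
        norm_num [clebschGordanValue]
    _ = 2 / π * Complex.Gamma (1 / 2) ^ 2 := by
        rw [hhalf, hone]
        field_simp
    _ = 2 := by
        rw [hsq]
        field_simp

lemma gammaRatio_add_two_div_two {a : ℂ} (h : a ≠ 0) (h' : a + 1 ≠ 0) :
    gammaRatio ((a + 2) / 2) = a / (a + 1) * gammaRatio (a / 2) := by
  have hdiv : a / 2 + 1 / 2 = (a + 1) / 2 := by ring
  rw [show (a + 2) / 2 = a / 2 + 1 by ring, gammaRatio_add_one (div_ne_zero h two_ne_zero)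
    (hdiv ▸ div_ne_zero h' two_ne_zero), hdiv, div_div_div_cancel_right₀ two_ne_zero]

lemma clebschGordanValue_add_two {ν : ℂ} (hν : ∀ m : ℤ, 3 * ν ≠ m) :
    (ν + 2) ^ 2 * (3 * ν + 5) * (3 * ν + 7) * clebschGordanValue (ν + 2) =
      (ν + 1) ^ 2 * (3 * ν + 2) * (3 * ν + 4) * clebschGordanValue ν := by
  have hne (k : ℕ) : 3 * ν + k ≠ 0 := fun h => hν (-k) (by push_cast; linear_combination h)
  have h1 : ν + 1 ≠ 0 := fun h => hne 3 (by push_cast; linear_combination 3 * h)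
  have h2 : ν + 2 ≠ 0 := fun h => hne 6 (by push_cast; linear_combination 3 * h)
  have h5 : ν * 3 + 5 ≠ 0 := by simpa [mul_comm] using hne 5
  have h7 : ν * 3 + 7 ≠ 0 := by simpa [mul_comm] using hne 7
  have hshift : gammaRatio ((ν + 3) / 2) = (ν + 1) / (ν + 2) * gammaRatio ((ν + 1) / 2) := by
    convert gammaRatio_add_two_div_two h1 (by rwa [add_assoc, one_add_one_eq_two]) using 3 <;>
      ring
  have hstep (k : ℕ) : gammaRatio ((3 * ν + (k + 2 : ℕ)) / 2) =
      (3 * ν + k) / (3 * ν + (k + 1 : ℕ)) * gammaRatio ((3 * ν + k) / 2) := by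
    simpa [add_assoc] using
      gammaRatio_add_two_div_two (hne k) (by simpa [add_assoc] using hne (k + 1))
  have hshift3 : gammaRatio ((3 * ν + 8) / 2) =
      (3 * ν + 6) / (3 * ν + 7) * ((3 * ν + 4) / (3 * ν + 5) *
        ((3 * ν + 2) / (3 * ν + 3) * gammaRatio ((3 * ν + 2) / 2))) := by
    have h2 := hstep 2
    have h4 := hstep 4
    have h6 := hstep 6
    norm_num at h2 h4 h6
    rw [h6, h4, h2]
  rw [clebschGordanValue, clebschGordanValue, show ν + 2 + 1 = ν + 3 by ring, hshift,
    show 3 * (ν + 2) + 2 = 3 * ν + 8 by ring, hshift3,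
    show (π : ℂ) * (ν + 2) = π * ν + 2 * π by ring,
    show (π * ν + 2 * π : ℂ) / 2 = π * ν / 2 + π by ring, Complex.cos_add_two_pi,
    Complex.cos_add_pi]
  field_simp
  ring

lemma one_sub_mul_sin_sq_mul_cot_pow_mul_tan_three_mul {x : ℂ} (hsin : Complex.sin x ≠ 0)
    (hcos3 : Complex.cos (3 * x) ≠ 0) :
    (1 - 2 * Complex.cos (2 * x)) * Complex.sin x ^ 2 * (-(Complex.cos x / Complex.sin x)) ^ 3 *
        (Complex.sin (3 * x) / Complex.cos (3 * x)) =
      (1 + 2 * Complex.cos (2 * x)) * Complex.cos x ^ 2 := by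
  rw [mul_comm] at hcos3
  field_simp
  rw [mul_comm x 3, Complex.cos_two_mul_eq_one_sub, Complex.sin_three_mul, Complex.cos_three_mul]
  linear_combination -4 * Complex.sin x * Complex.cos x ^ 3 *
    (3 - 4 * Complex.sin x ^ 2) * Complex.sin_sq_add_cos_sq x

lemma clebschGordanValue_neg_one_sub {ν : ℂ} (hν : ∀ m : ℤ, 3 * ν ≠ m) :
    clebschGordanValue (-1 - ν) = clebschGordanValue ν := by
  have hpi : (π : ℂ) ≠ 0 := Complex.ofReal_ne_zero.mpr pi_ne_zero
  set x : ℂ := π * ν / 2 with hx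
  have hsin3 : Complex.sin (3 * x) ≠ 0 := fun h => by
    obtain ⟨k, hk⟩ := Complex.sin_eq_zero_iff.mp h
    exact hν (2 * k) (mul_left_cancel₀ hpi (by push_cast; linear_combination 2 * hk - 6 * hx))
  have hcos3 : Complex.cos (3 * x) ≠ 0 := fun h => by
    obtain ⟨k, hk⟩ := Complex.cos_eq_zero_iff.mp h
    exact hν (2 * k + 1) (mul_left_cancel₀ hpi
      (by push_cast; linear_combination 2 * hk - 6 * hx))
  have hcos : Complex.cos (π * (-1 - ν)) = -Complex.cos (2 * x) := by
    rw [← Complex.cos_add_pi, ← Complex.cos_neg, hx]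
    ring_nf
  have hhalf : Complex.cos (π * (-1 - ν) / 2) = -Complex.sin x := by
    rw [← Complex.cos_add_pi_div_two, ← Complex.cos_neg, hx]
    ring_nf
  have hratio : gammaRatio ((-1 - ν + 1) / 2) =
      -(Complex.cos x / Complex.sin x) * gammaRatio ((ν + 1) / 2) := by
    rw [show (-1 - ν + 1) / 2 = 1 / 2 - (ν + 1) / 2 by ring, gammaRatio_one_half_sub,
      show (π * ((ν + 1) / 2) : ℂ) = x + π / 2 by rw [hx]; ring, Complex.tan_eq_sin_div_cos,
      Complex.sin_add_pi_div_two, Complex.cos_add_pi_div_two, div_neg]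
    exact fun m hm => hν (3 * m - 3) (by push_cast; linear_combination 3 * hm)
  have hratio3 : gammaRatio ((3 * (-1 - ν) + 2) / 2) =
      Complex.sin (3 * x) / Complex.cos (3 * x) * gammaRatio ((3 * ν + 2) / 2) := by
    rw [show (3 * (-1 - ν) + 2) / 2 = 1 / 2 - (3 * ν + 2) / 2 by ring, gammaRatio_one_half_sub,
      show (π * ((3 * ν + 2) / 2) : ℂ) = 3 * x + π by rw [hx]; ring, Complex.tan_add_pi,
      Complex.tan_eq_sin_div_cos]
    exact fun m hm => hν (m - 2) (by push_cast; linear_combination hm)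
  have hS : Complex.sin x ≠ 0 := fun h => hsin3 (by rw [Complex.sin_three_mul, h]; ring)
  rw [clebschGordanValue, clebschGordanValue, hcos, hhalf, hratio, hratio3, ← hx,
    show (π * ν : ℂ) = 2 * x by rw [hx]; ring]
  linear_combination gammaRatio ((ν + 1) / 2) ^ 3 * gammaRatio ((3 * ν + 2) / 2) / (3 * π) *
    one_sub_mul_sin_sq_mul_cot_pow_mul_tan_three_mul hS hcos3

lemma re_half_pos_of_abs_re_lt {ν : ℂ} (hν : |ν.re| < 2 / 3) :
    0 < ((ν + 1) / 2).re ∧ 0 < ((3 * ν + 2) / 2).re := by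
  rw [abs_lt] at hν
  have h3 : (3 * ν).re = 3 * ν.re := by simp
  rw [Complex.div_ofNat_re, Complex.div_ofNat_re, Complex.add_re, Complex.add_re, h3,
    Complex.one_re, Complex.re_ofNat]
  constructor <;> linarith

lemma abs_re_pi_mul_div_two (ν : ℂ) : |(π * ν / 2 : ℂ).re| = π * |ν.re| / 2 := by
  rw [Complex.div_ofNat_re, Complex.re_ofReal_mul, abs_div, abs_mul, abs_of_pos pi_pos,
    Nat.abs_ofNat]

lemma clebschGordanValue_ne_zero {ν : ℂ} (hν : |ν.re| < 2 / 3) : clebschGordanValue ν ≠ 0 := by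
  obtain ⟨h1, h3⟩ := re_half_pos_of_abs_re_lt hν
  have hpi : (3 * π : ℂ) ≠ 0 := mul_ne_zero three_ne_zero (Complex.ofReal_ne_zero.mpr pi_ne_zero)
  have hre : |(π * ν / 2 : ℂ).re| < π / 3 := by
    rw [abs_re_pi_mul_div_two]
    nlinarith [pi_pos]
  have hcos : Complex.cos (π * ν / 2) ≠ 0 := fun h => by
    have := one_half_lt_cos_re hre
    norm_num [h] at this
  have hcos2 : 1 + 2 * Complex.cos (π * ν) ≠ 0 := by
    simpa only [mul_div_cancel₀ _ (two_ne_zero (α := ℂ))] using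
      one_add_two_mul_cos_two_mul_ne_zero hre
  exact mul_ne_zero (div_ne_zero (mul_ne_zero hcos2 (pow_ne_zero 2 hcos)) hpi)
    (mul_ne_zero (pow_ne_zero 3 (gammaRatio_ne_zero h1)) (gammaRatio_ne_zero h3))

lemma differentiableAt_clebschGordanValue {ν : ℂ} (hν : |ν.re| < 2 / 3) :
    DifferentiableAt ℂ clebschGordanValue ν := by
  obtain ⟨h1, h3⟩ := re_half_pos_of_abs_re_lt hν
  have hd1 : DifferentiableAt ℂ (fun ν => gammaRatio ((ν + 1) / 2)) ν :=
    (differentiableAt_gammaRatio h1).comp (f := fun ν => (ν + 1) / 2) ν (by fun_prop)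
  have hd3 : DifferentiableAt ℂ (fun ν => gammaRatio ((3 * ν + 2) / 2)) ν :=
    (differentiableAt_gammaRatio h3).comp (f := fun ν => (3 * ν + 2) / 2) ν (by fun_prop)
  unfold clebschGordanValue
  fun_prop

lemma exp_div_le_norm_one_add_two_mul_cos_mul_cos_sq {ν : ℂ} (hν : |ν.re| ≤ 1 / 2) :
    rexp (2 * π * |ν.im|) / 32 ≤
      ‖1 + 2 * Complex.cos (π * ν)‖ * ‖Complex.cos (π * ν / 2)‖ ^ 2 := by
  have hre : |(π * ν / 2 : ℂ).re| ≤ π / 4 := by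
    rw [abs_re_pi_mul_div_two]
    nlinarith [pi_pos]
  have him : 2 * |(π * ν / 2 : ℂ).im| = π * |ν.im| := by
    rw [Complex.div_ofNat_im, Complex.im_ofReal_mul, abs_div, abs_mul, abs_of_pos pi_pos,
      Nat.abs_ofNat, mul_div_cancel₀ _ two_ne_zero]
  have hcos := exp_two_mul_abs_im_div_eight_le_norm_cos_sq hre
  have hcos2 := exp_two_mul_abs_im_div_four_le_norm_one_add_two_mul_cos hre
  rw [him] at hcos hcos2
  rw [mul_div_cancel₀ _ two_ne_zero] at hcos2
  calc rexp (2 * π * |ν.im|) / 32 = rexp (π * |ν.im|) / 4 * (rexp (π * |ν.im|) / 8) := by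
        rw [mul_assoc, two_mul, exp_add]
        ring
    _ ≤ _ := by gcongr

lemma exists_norm_inv_clebschGordanValue_le : ∃ K : ℝ, 0 ≤ K ∧ ∀ ν : ℂ, |ν.re| ≤ 1 / 2 →
    ‖(clebschGordanValue ν)⁻¹‖ ≤ K * (1 + |ν.im|) ^ 4 / rexp (2 * π * |ν.im|) := by
  obtain ⟨K, hK, hbound⟩ := exists_norm_inv_gammaRatio_le
  refine ⟨192 * π * K ^ 4, by positivity, fun ν hν => ?_⟩
  obtain ⟨h1, h3⟩ := re_half_pos_of_abs_re_lt (hν.trans_lt (by norm_num))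
  have htrig := exp_div_le_norm_one_add_two_mul_cos_mul_cos_sq hν
  have hnorm : ‖ν‖ ≤ 1 / 2 + |ν.im| :=
    (Complex.norm_le_abs_re_add_abs_im ν).trans (add_le_add_left hν _)
  have hratio : ‖(gammaRatio ((ν + 1) / 2))⁻¹‖ ≤ K * (1 + |ν.im|) := by
    refine (hbound _ h1).trans ?_
    gcongr
    rw [norm_div, Complex.norm_ofNat]
    linarith [norm_add_le ν 1, norm_one (α := ℂ), abs_nonneg ν.im]
  have hratio3 : ‖(gammaRatio ((3 * ν + 2) / 2))⁻¹‖ ≤ K * (2 * (1 + |ν.im|)) := by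
    refine (hbound _ h3).trans ?_
    gcongr
    have hle := norm_add_le (3 * ν) 2
    rw [norm_mul, Complex.norm_ofNat, Complex.norm_ofNat] at hle
    rw [norm_div, Complex.norm_ofNat]
    linarith [abs_nonneg ν.im]
  calc ‖(clebschGordanValue ν)⁻¹‖
      = 3 * π / (‖1 + 2 * Complex.cos (π * ν)‖ * ‖Complex.cos (π * ν / 2)‖ ^ 2) *
          (‖(gammaRatio ((ν + 1) / 2))⁻¹‖ ^ 3 * ‖(gammaRatio ((3 * ν + 2) / 2))⁻¹‖) := by
        simp only [clebschGordanValue, norm_inv, norm_mul, norm_div, norm_pow, Complex.norm_real,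
          norm_eq_abs, abs_of_pos pi_pos, Complex.norm_ofNat, mul_inv, inv_div, inv_pow]
    _ ≤ 3 * π / (rexp (2 * π * |ν.im|) / 32) *
          ((K * (1 + |ν.im|)) ^ 3 * (K * (2 * (1 + |ν.im|)))) := by gcongr
    _ = 192 * π * K ^ 4 * (1 + |ν.im|) ^ 4 / rexp (2 * π * |ν.im|) := by
        field_simp
        ring

lemma clebschGordanValue_eq {ν : ℂ} (hν : ∀ m : ℤ, ν ≠ 2 * m + 1) :
    clebschGordanValue ν = (1 + 2 * Complex.cos (π * ν)) / 3 *
      (π * Complex.Gamma ((ν + 1) / 2) * Complex.Gamma ((3 * ν + 2) / 2) /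
        (Complex.Gamma ((1 - ν) / 2) ^ 2 * Complex.Gamma ((ν + 2) / 2) ^ 3 *
          Complex.Gamma ((3 * ν + 3) / 2))) := by
  have hpi : (π : ℂ) ≠ 0 := Complex.ofReal_ne_zero.mpr pi_ne_zero
  have hcos : Complex.cos (π * ν / 2) ≠ 0 := fun h => by
    obtain ⟨k, hk⟩ := Complex.cos_eq_zero_iff.mp h
    exact hν k (mul_left_cancel₀ hpi (by linear_combination 2 * hk))
  have hreflect : Complex.Gamma ((ν + 1) / 2) * Complex.Gamma ((1 - ν) / 2) =
      π / Complex.cos (π * ν / 2) := by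
    convert Gamma_one_half_add_mul_Gamma_one_half_sub (ν / 2) using 3 <;> ring_nf
  have hprod := hreflect ▸ div_ne_zero hpi hcos
  have hA := left_ne_zero_of_mul hprod
  have hB := right_ne_zero_of_mul hprod
  have hcos_eq : Complex.cos (π * ν / 2) =
      π / (Complex.Gamma ((ν + 1) / 2) * Complex.Gamma ((1 - ν) / 2)) := by
    rw [hreflect, div_div_cancel₀ hpi]
  rw [clebschGordanValue, gammaRatio, gammaRatio, hcos_eq,
    show (ν + 1) / 2 + 1 / 2 = (ν + 2) / 2 by ring,
    show (3 * ν + 2) / 2 + 1 / 2 = (3 * ν + 3) / 2 by ring]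
  field_simp

/-! ### Entire functions of polynomial growth and the conclusion -/

lemma differentiable_dslope {g : ℂ → ℂ} (hg : Differentiable ℂ g) (a : ℂ) :
    Differentiable ℂ (dslope g a) := by
  rw [← differentiableOn_univ] at hg ⊢
  exact (Complex.differentiableOn_dslope Filter.univ_mem).mpr hg

lemma exists_norm_dslope_zero_le {g : ℂ → ℂ} (hg : Differentiable ℂ g) {K : ℝ} {n : ℕ}
    (hbound : ∀ z, ‖g z‖ ≤ K * (1 + ‖z‖) ^ (n + 1)) :
    ∃ K' : ℝ, ∀ z, ‖dslope g 0 z‖ ≤ K' * (1 + ‖z‖) ^ n := by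
  obtain ⟨M, hM⟩ := (isCompact_closedBall (0 : ℂ) 1).exists_bound_of_continuousOn
    (differentiable_dslope hg 0).continuous.continuousOn
  have hM0 : 0 ≤ M := (norm_nonneg _).trans (hM 0 (Metric.mem_closedBall_self zero_le_one))
  have hK : 0 ≤ K := by simpa using (norm_nonneg _).trans (hbound 0)
  refine ⟨4 * K + M, fun z => ?_⟩
  rcases le_total ‖z‖ 1 with hz | hz
  · have hpow : 1 ≤ (1 + ‖z‖) ^ n := one_le_pow₀ (by linarith [norm_nonneg z])
    nlinarith [hM z (mem_closedBall_zero_iff.mpr hz)]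
  · have hz0 : 0 < ‖z‖ := by linarith
    rw [dslope_of_ne _ (norm_pos_iff.mp hz0), slope_def_field, sub_zero, norm_div,
      div_le_iff₀ hz0]
    have hone : 1 ≤ (1 + ‖z‖) ^ (n + 1) := one_le_pow₀ (by linarith)
    calc ‖g z - g 0‖ ≤ K * (1 + ‖z‖) ^ (n + 1) + K := by
          simpa using norm_sub_le_of_le (hbound z) (hbound 0)
      _ ≤ K * (1 + ‖z‖) ^ (n + 1) + K * (1 + ‖z‖) ^ (n + 1) := by
          gcongr
          exact le_mul_of_one_le_right hK hone
      _ = 2 * K * (1 + ‖z‖) ^ n * (1 + ‖z‖) := by ring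
      _ ≤ 2 * K * (1 + ‖z‖) ^ n * (‖z‖ + ‖z‖) := by gcongr
      _ = 4 * K * (1 + ‖z‖) ^ n * ‖z‖ := by ring
      _ ≤ (4 * K + M) * (1 + ‖z‖) ^ n * ‖z‖ := by
          gcongr
          exact le_add_of_nonneg_right hM0

open Polynomial in
theorem exists_polynomial_of_norm_le {g : ℂ → ℂ} (hg : Differentiable ℂ g) {K : ℝ} {n : ℕ}
    (hbound : ∀ z, ‖g z‖ ≤ K * (1 + ‖z‖) ^ n) : ∃ p : ℂ[X], ∀ z, g z = p.eval z := by
  induction n generalizing g K with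
  | zero =>
    have hbounded : Bornology.IsBounded (Set.range g) :=
      isBounded_iff_forall_norm_le.mpr ⟨K, Set.forall_mem_range.mpr (by simpa using hbound)⟩
    obtain ⟨c, hc⟩ := hg.exists_const_forall_eq_of_bounded hbounded
    exact ⟨C c, by simpa using hc⟩
  | succ n ih =>
    obtain ⟨K', hK'⟩ := exists_norm_dslope_zero_le hg hbound
    obtain ⟨q, hq⟩ := ih (differentiable_dslope hg 0) hK'
    refine ⟨C (g 0) + X * q, fun z => ?_⟩
    have hslope := sub_smul_dslope g 0 z
    rw [sub_zero, smul_eq_mul, hq] at hslope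
    rw [eval_add, eval_C, eval_mul, eval_X, hslope, add_sub_cancel]

theorem exists_differentiable_of_forall_comp_eq {𝕜 E E' F ι : Type*}
    [NontriviallyNormedField 𝕜] [NormedAddCommGroup E] [NormedSpace 𝕜 E]
    [NormedAddCommGroup E'] [NormedSpace 𝕜 E'] [NormedAddCommGroup F] [NormedSpace 𝕜 F]
    {U : Set E'} (hU : IsOpen U) {σ : ι → E → E'} (hσ : ∀ i, Differentiable 𝕜 (σ i))
    (hcover : ∀ z, ∃ i, σ i z ∈ U) {f : E' → F} (hf : DifferentiableOn 𝕜 f U)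
    (hglue : ∀ i j z, σ i z ∈ U → σ j z ∈ U → f (σ i z) = f (σ j z)) :
    ∃ g : E → F, Differentiable 𝕜 g ∧ ∀ i z, σ i z ∈ U → g z = f (σ i z) := by
  choose i hi using hcover
  refine ⟨fun z => f (σ (i z) z), fun z => ?_, fun j z hj => hglue _ _ z (hi z) hj⟩
  have hlocal : (fun w => f (σ (i w) w)) =ᶠ[nhds z] fun w => f (σ (i z) w) := by
    filter_upwards [(hU.preimage (hσ (i z)).continuous).mem_nhds (hi z)] with w hw
    exact hglue _ _ w (hi w) hw
  exact ((hf.differentiableAt (hU.mem_nhds (hi z))).comp z (hσ (i z) z)).congr_of_eventuallyEq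
    hlocal

/-- The quotient of the cubic integral by its expected value. -/
noncomputable def clebschGordanQuotient (ν : ℂ) : ℂ :=
  legendreCubicIntegral ν / clebschGordanValue ν

/-- The elements `z ↦ (-1) ^ n * (z - n)` of the infinite dihedral group generated by the
reflections `z ↦ 1 - z` and `z ↦ -1 - z`. They map the strip `|re z - n| < 2 / 3` onto
`|re z| < 2 / 3`. -/
noncomputable def dihedralMap (n : ℤ) (z : ℂ) : ℂ := (-1) ^ n * (z - n)

lemma clebschGordanQuotient_neg_one_sub {ν : ℂ} (hν : ∀ m : ℤ, 3 * ν ≠ m) :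
    clebschGordanQuotient (-1 - ν) = clebschGordanQuotient ν := by
  rw [clebschGordanQuotient, clebschGordanQuotient, legendreCubicIntegral_neg_one_sub,
    clebschGordanValue_neg_one_sub hν]

lemma clebschGordanQuotient_add_two {ν : ℂ} (hν : ∀ m : ℤ, 3 * ν ≠ m) :
    clebschGordanQuotient (ν + 2) = clebschGordanQuotient ν := by
  have hne (k : ℕ) : 3 * ν + k ≠ 0 := fun h => hν (-k) (by push_cast; linear_combination h)
  have h1 : ν + 1 ≠ 0 := fun h => hne 3 (by push_cast; linear_combination 3 * h)
  have h2 : ν + 2 ≠ 0 := fun h => hne 6 (by push_cast; linear_combination 3 * h)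
  have hleft : (ν + 2) ^ 2 * (3 * ν + 5) * (3 * ν + 7) ≠ 0 :=
    mul_ne_zero (mul_ne_zero (pow_ne_zero 2 h2) (mod_cast hne 5)) (mod_cast hne 7)
  have hright : (ν + 1) ^ 2 * (3 * ν + 2) * (3 * ν + 4) ≠ 0 :=
    mul_ne_zero (mul_ne_zero (pow_ne_zero 2 h1) (mod_cast hne 2)) (mod_cast hne 4)
  rw [clebschGordanQuotient, clebschGordanQuotient, ← mul_div_mul_left _ _ hleft,
    legendreCubicIntegral_add_two h1 h2, clebschGordanValue_add_two hν,
    mul_div_mul_left _ _ hright]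

lemma clebschGordanQuotient_one_sub {ν : ℂ} (hν : ∀ m : ℤ, 3 * ν ≠ m) :
    clebschGordanQuotient (1 - ν) = clebschGordanQuotient ν := by
  have hν' : ∀ m : ℤ, 3 * (ν - 2) ≠ m := fun m hm =>
    hν (m + 6) (by push_cast; linear_combination hm)
  rw [show 1 - ν = -1 - (ν - 2) by ring, clebschGordanQuotient_neg_one_sub hν',
    ← clebschGordanQuotient_add_two hν', sub_add_cancel]

lemma dihedralMap_zero (z : ℂ) : dihedralMap 0 z = z := by simp [dihedralMap]

lemma dihedralMap_add_one (n : ℤ) (z : ℂ) :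
    dihedralMap (n + 1) z = (-1) ^ n - dihedralMap n z := by
  rw [dihedralMap, dihedralMap, zpow_add_one₀ (neg_ne_zero.mpr one_ne_zero)]
  push_cast
  ring

lemma three_mul_dihedralMap_ne_intCast (n : ℤ) {z : ℂ} (hz : ∀ m : ℤ, 3 * z ≠ m) (m : ℤ) :
    3 * dihedralMap n z ≠ m := fun h => by
  rw [dihedralMap] at h
  rcases n.even_or_odd with hn | hn
  · rw [hn.neg_one_zpow] at h
    exact hz (m + 3 * n) (by push_cast; linear_combination h)
  · rw [hn.neg_one_zpow] at h
    exact hz (-m + 3 * n) (by push_cast; linear_combination -h)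

lemma clebschGordanQuotient_dihedralMap {z : ℂ} (hz : ∀ m : ℤ, 3 * z ≠ m) (n : ℤ) :
    clebschGordanQuotient (dihedralMap n z) = clebschGordanQuotient z := by
  have hstep (n : ℤ) : clebschGordanQuotient (dihedralMap (n + 1) z) =
      clebschGordanQuotient (dihedralMap n z) := by
    have hgeneric := three_mul_dihedralMap_ne_intCast n hz
    rw [dihedralMap_add_one]
    rcases n.even_or_odd with hn | hn
    · rw [hn.neg_one_zpow, clebschGordanQuotient_one_sub hgeneric]
    · rw [hn.neg_one_zpow, clebschGordanQuotient_neg_one_sub hgeneric]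
  induction n with
  | zero => rw [dihedralMap_zero]
  | succ n ih => rw [hstep, ih]
  | pred n ih => rw [← ih, ← hstep, sub_add_cancel]

lemma abs_re_dihedralMap (n : ℤ) (z : ℂ) : |(dihedralMap n z).re| = |z.re - n| := by
  rcases n.even_or_odd with hn | hn <;> simp [dihedralMap, hn.neg_one_zpow, abs_sub_comm]

lemma abs_im_dihedralMap (n : ℤ) (z : ℂ) : |(dihedralMap n z).im| = |z.im| := by
  rcases n.even_or_odd with hn | hn <;> simp [dihedralMap, hn.neg_one_zpow]

lemma exists_norm_clebschGordanQuotient_le : ∃ K : ℝ, 0 ≤ K ∧ ∀ ν : ℂ, |ν.re| ≤ 1 / 2 →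
    ‖clebschGordanQuotient ν‖ ≤ K * (1 + |ν.im|) ^ 4 := by
  obtain ⟨C, hC, hintegral⟩ := exists_norm_legendreCubicIntegral_le
  obtain ⟨K, hK, hvalue⟩ := exists_norm_inv_clebschGordanValue_le
  refine ⟨C * K, mul_nonneg hC hK, fun ν hν => ?_⟩
  calc ‖clebschGordanQuotient ν‖
      = ‖legendreCubicIntegral ν‖ * ‖(clebschGordanValue ν)⁻¹‖ := by
        rw [clebschGordanQuotient, div_eq_mul_inv, norm_mul]
    _ ≤ C * rexp (2 * π * |ν.im|) * (K * (1 + |ν.im|) ^ 4 / rexp (2 * π * |ν.im|)) := by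
        gcongr
        exacts [hintegral ν, hvalue ν hν]
    _ = C * K * (1 + |ν.im|) ^ 4 := by field_simp

lemma eq_of_abs_re_dihedralMap_lt {i j : ℤ} {z : ℂ} {m : ℤ} (hz : 3 * z = m)
    (hi : |(dihedralMap i z).re| < 2 / 3) (hj : |(dihedralMap j z).re| < 2 / 3) : i = j := by
  have hre : 3 * z.re = m := by simpa using congrArg Complex.re hz
  rw [abs_re_dihedralMap, abs_lt] at hi hj
  have hi1 : -2 < m - 3 * i := by exact_mod_cast (by linarith : (-2 : ℝ) < m - 3 * i)
  have hi2 : m - 3 * i < 2 := by exact_mod_cast (by linarith : (m - 3 * i : ℝ) < 2)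
  have hj1 : -2 < m - 3 * j := by exact_mod_cast (by linarith : (-2 : ℝ) < m - 3 * j)
  have hj2 : m - 3 * j < 2 := by exact_mod_cast (by linarith : (m - 3 * j : ℝ) < 2)
  omega

lemma abs_re_dihedralMap_round_le (z : ℂ) : |(dihedralMap (round z.re) z).re| ≤ 1 / 2 := by
  rw [abs_re_dihedralMap]
  exact abs_sub_round z.re

-- Two of the strips `|re z - n| < 2 / 3` overlap only where `3 * z` is not an integer, and there
-- the quotient is invariant under the dihedral group.
theorem exists_entire_eq_clebschGordanQuotient_dihedralMap :
    ∃ g : ℂ → ℂ, Differentiable ℂ g ∧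
      ∀ n z, |(dihedralMap n z).re| < 2 / 3 → g z = clebschGordanQuotient (dihedralMap n z) := by
  refine exists_differentiable_of_forall_comp_eq (U := {w : ℂ | |w.re| < 2 / 3})
    (isOpen_lt (by fun_prop) continuous_const) (fun n => ?_)
    (fun z => ⟨round z.re, (abs_re_dihedralMap_round_le z).trans_lt (by norm_num)⟩)
    (fun w hw => ?_) fun i j z hi hj => ?_
  · unfold dihedralMap
    fun_prop
  · exact ((differentiable_legendreCubicIntegral w).div (differentiableAt_clebschGordanValue hw)
      (clebschGordanValue_ne_zero hw)).differentiableWithinAt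
  · by_cases hz : ∀ m : ℤ, 3 * z ≠ m
    · rw [clebschGordanQuotient_dihedralMap hz, clebschGordanQuotient_dihedralMap hz]
    · push Not at hz
      obtain ⟨m, hm⟩ := hz
      rw [eq_of_abs_re_dihedralMap_lt hm hi hj]

theorem clebschGordanQuotient_eq_one {ν : ℂ} (hν : ∀ m : ℤ, 3 * ν ≠ m) :
    clebschGordanQuotient ν = 1 := by
  obtain ⟨g, hg, heq⟩ := exists_entire_eq_clebschGordanQuotient_dihedralMap
  obtain ⟨K, hK, hbound⟩ := exists_norm_clebschGordanQuotient_le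
  have hround (z : ℂ) : g z = clebschGordanQuotient (dihedralMap (round z.re) z) :=
    heq _ z ((abs_re_dihedralMap_round_le z).trans_lt (by norm_num))
  obtain ⟨p, hp⟩ := exists_polynomial_of_norm_le hg (K := K) (n := 4) fun z => by
    rw [hround]
    refine (hbound _ (abs_re_dihedralMap_round_le z)).trans ?_
    rw [abs_im_dihedralMap]
    gcongr
    exact Complex.abs_im_le_norm z
  have hint (n : ℤ) : g n = 1 := by
    have hzero : dihedralMap n n = 0 := by rw [dihedralMap, sub_self, mul_zero]
    rw [heq n n (by rw [hzero]; norm_num), hzero, clebschGordanQuotient,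
      legendreCubicIntegral_zero, clebschGordanValue_zero, div_self two_ne_zero]
  have hp_one : p = 1 := Polynomial.eq_of_infinite_eval_eq _ _
    (Set.infinite_of_injective_forall_mem Int.cast_injective fun n : ℤ => by
      simp only [Set.mem_ofPred_eq, ← hp, hint, Polynomial.eval_one])
  rw [← clebschGordanQuotient_dihedralMap hν (round ν.re), ← hround, hp, hp_one,
    Polynomial.eval_one]

/-- Generalized Clebsch–Gordan integral of three Legendre functions of equal degree. -/
theorem stmt_6 (ν : ℂ) (hν : ∀ m : ℤ, ν ≠ (m : ℂ)) (hν3 : ∀ m : ℤ, 3*ν ≠ (m : ℂ)) :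
    (∫ x in (-1:ℝ)..1, (legendreP ν x)^2 * legendreP ν (-x))
      = ((1 + 2 * Complex.cos ((π:ℂ) * ν)) / 3) *
        ((π:ℂ) * Complex.Gamma ((ν+1)/2) * Complex.Gamma ((3*ν+2)/2)
          / ((Complex.Gamma ((1-ν)/2))^2 * (Complex.Gamma ((ν+2)/2))^3
              * Complex.Gamma ((3*ν+3)/2))) := by
  have hquotient : legendreCubicIntegral ν / clebschGordanValue ν = 1 :=
    clebschGordanQuotient_eq_one hν3
  rw [← clebschGordanValue_eq fun m => mod_cast hν (2 * m + 1)]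
  exact eq_of_div_eq_one hquotient
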